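/- arXiv:2101.06912 — 3 statements merged into one kernel-verified Lean document; each statement's English description precedes it below -/
import Mathlib

section
/- Let (R_i)_{i∈I} be a generic rectangular tiling of a rectangle F. Then (R_i)_{i∈I} is area-universal if and only if every maximal internal line segment of the tiling is equal to a side of at least one of the rectangles R_i. -/
/-!
Suppose every maximal segment is a side. Then the vertical ranges of two rectangles touching along
a vertical side are nested, and similarly with the axes exchanged; together with genericity this
makes the product of any horizontal and any vertical assignment of coordinates that respects the
contacts of `T` a tiling weakly equivalent to `T`. Among the horizontal assignments in a fixed
frame, which form a compact set, take one maximizing `∏ i, (width i) ^ w i`. Its criticality says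
that the amounts `w i / width i` are balanced along every vertical segment, like a flow from left
to right. The amount of this flow below a point is therefore a vertical coordinate, for which
rectangle `i` has height `w i / width i` and hence area `w i`.

Conversely, near a maximal segment that is not a side, genericity yields two rectangles one of
which lies to the lower left of the other, for combinatorial reasons that persist in every weakly
equivalent tiling. If both have area `1`, the bounding rectangle has area at least `4`, which is
impossible when the other areas add up to at most `1`.
-/

open Set

/-- An axis-parallel rectangle `[x1,x2] × [y1,y2]` with `x1 < x2` and `y1 < y2`. -/
structure Rect where
  x1 : ℝ
  x2 : ℝ
  y1 : ℝ
  y2 : ℝ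
  hx : x1 < x2
  hy : y1 < y2

namespace Rect

/-- The rectangle as a subset of the plane. -/
def toSet (R : Rect) : Set (ℝ × ℝ) := Set.Icc R.x1 R.x2 ×ˢ Set.Icc R.y1 R.y2

/-- The area of the rectangle. -/
noncomputable def area (R : Rect) : ℝ := (R.x2 - R.x1) * (R.y2 - R.y1)

end Rect

/-- Vertical closed segment `{x} × [c,d]`. -/
def vseg (x c d : ℝ) : Set (ℝ × ℝ) := ({x} : Set ℝ) ×ˢ Set.Icc c d

/-- Horizontal closed segment `[a,b] × {y}`. -/
def hseg (a b y : ℝ) : Set (ℝ × ℝ) := Set.Icc a b ×ˢ ({y} : Set ℝ)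

/-- Relative interior of a vertical segment. -/
def vsegOpen (x c d : ℝ) : Set (ℝ × ℝ) := ({x} : Set ℝ) ×ˢ Set.Ioo c d

/-- Relative interior of a horizontal segment. -/
def hsegOpen (a b y : ℝ) : Set (ℝ × ℝ) := Set.Ioo a b ×ˢ ({y} : Set ℝ)

/-- `S` is one of the four sides of the rectangle `R`. -/
def Rect.IsSide (R : Rect) (S : Set (ℝ × ℝ)) : Prop :=
  S = vseg R.x1 R.y1 R.y2 ∨ S = vseg R.x2 R.y1 R.y2 ∨
  S = hseg R.x1 R.x2 R.y1 ∨ S = hseg R.x1 R.x2 R.y2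

/-- A rectangular tiling: a finite family of axis-parallel rectangles with pairwise
disjoint interiors whose union is an axis-parallel rectangle `F`. -/
structure Tiling (I : Type*) [Fintype I] where
  R : I → Rect
  F : Rect
  disj : Pairwise fun i j => interior ((R i).toSet) ∩ interior ((R j).toSet) = ∅
  union : (⋃ i, (R i).toSet) = F.toSet

variable {I : Type*} [Fintype I]

/-- An internal line segment of a tiling: a horizontal or vertical closed segment of
positive length contained in the union of the boundaries of the rectangles, whose
relative interior lies in the topological interior of the bounding rectangle. -/
def IsInternalSeg (T : Tiling I) (S : Set (ℝ × ℝ)) : Prop :=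
  (∃ x c d : ℝ, c < d ∧ S = vseg x c d ∧
      S ⊆ (⋃ i, frontier ((T.R i).toSet)) ∧ vsegOpen x c d ⊆ interior T.F.toSet) ∨
  (∃ a b y : ℝ, a < b ∧ S = hseg a b y ∧
      S ⊆ (⋃ i, frontier ((T.R i).toSet)) ∧ hsegOpen a b y ⊆ interior T.F.toSet)

/-- A maximal internal line segment: an internal segment not properly contained in
any other internal segment. -/
def IsMaxInternalSeg (T : Tiling I) (S : Set (ℝ × ℝ)) : Prop :=
  IsInternalSeg T S ∧ ∀ S', IsInternalSeg T S' → S ⊆ S' → S' = S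

/-- `A ∩ B` is a vertical segment of positive length with `A` lying to the left of `B`. -/
def LeftAdj (A B : Rect) : Prop :=
  A.x2 = B.x1 ∧ ∃ c d : ℝ, c < d ∧ A.toSet ∩ B.toSet = vseg A.x2 c d

/-- `A ∩ B` is a horizontal segment of positive length with `A` lying below `B`. -/
def BelowAdj (A B : Rect) : Prop :=
  A.y2 = B.y1 ∧ ∃ a b : ℝ, a < b ∧ A.toSet ∩ B.toSet = hseg a b A.y2

/-- `A` meets the left side of `F` in a segment of positive length. -/
def MeetsLeftSide (A F : Rect) : Prop :=
  ∃ c d : ℝ, c < d ∧ A.toSet ∩ vseg F.x1 F.y1 F.y2 = vseg F.x1 c d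

/-- `A` meets the right side of `F` in a segment of positive length. -/
def MeetsRightSide (A F : Rect) : Prop :=
  ∃ c d : ℝ, c < d ∧ A.toSet ∩ vseg F.x2 F.y1 F.y2 = vseg F.x2 c d

/-- `A` meets the bottom side of `F` in a segment of positive length. -/
def MeetsBottomSide (A F : Rect) : Prop :=
  ∃ a b : ℝ, a < b ∧ A.toSet ∩ hseg F.x1 F.x2 F.y1 = hseg a b F.y1

/-- `A` meets the top side of `F` in a segment of positive length. -/
def MeetsTopSide (A F : Rect) : Prop :=
  ∃ a b : ℝ, a < b ∧ A.toSet ∩ hseg F.x1 F.x2 F.y2 = hseg a b F.y2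

/-- Two tilings indexed by the same finite set are weakly equivalent. -/
def WeakEquiv (T T' : Tiling I) : Prop :=
  (∀ i j : I, LeftAdj (T.R i) (T.R j) ↔ LeftAdj (T'.R i) (T'.R j)) ∧
  (∀ i j : I, BelowAdj (T.R i) (T.R j) ↔ BelowAdj (T'.R i) (T'.R j)) ∧
  (∀ i : I, MeetsLeftSide (T.R i) T.F ↔ MeetsLeftSide (T'.R i) T'.F) ∧
  (∀ i : I, MeetsRightSide (T.R i) T.F ↔ MeetsRightSide (T'.R i) T'.F) ∧
  (∀ i : I, MeetsTopSide (T.R i) T.F ↔ MeetsTopSide (T'.R i) T'.F) ∧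
  (∀ i : I, MeetsBottomSide (T.R i) T.F ↔ MeetsBottomSide (T'.R i) T'.F)

/-- A tiling is area-universal if every assignment of positive areas to the rectangles
is realized by a weakly equivalent tiling. -/
def AreaUniversal (T : Tiling I) : Prop :=
  ∀ w : I → ℝ, (∀ i, 0 < w i) → ∃ T' : Tiling I, WeakEquiv T T' ∧ ∀ i, (T'.R i).area = w i

/-- A tiling is generic if no point belongs to four or more of the rectangles. -/
def Generic (T : Tiling I) : Prop :=
  ∀ p : ℝ × ℝ, ∀ s : Finset I, (∀ i ∈ s, p ∈ (T.R i).toSet) → s.card ≤ 3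

/-- A side-attachment sequence: rectangles with pairwise disjoint interiors such that
every partial union `U_j = R_0 ∪ ⋯ ∪ R_j` is an axis-parallel rectangle. -/
def SideAttachSeq {n : ℕ} (R : Fin n → Rect) : Prop :=
  (Pairwise fun i j => interior ((R i).toSet) ∩ interior ((R j).toSet) = ∅) ∧
  ∀ j : Fin n, ∃ U : Rect, (⋃ i ∈ Set.Iic j, (R i).toSet) = U.toSet

/-! ### Rectangles, their symmetries and their contacts -/

namespace Rect

lemma mem_toSet {A : Rect} {p : ℝ × ℝ} :
    p ∈ A.toSet ↔ (A.x1 ≤ p.1 ∧ p.1 ≤ A.x2) ∧ A.y1 ≤ p.2 ∧ p.2 ≤ A.y2 := Iff.rfl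

lemma mem_interior_toSet {A : Rect} {p : ℝ × ℝ} :
    p ∈ interior A.toSet ↔ (A.x1 < p.1 ∧ p.1 < A.x2) ∧ A.y1 < p.2 ∧ p.2 < A.y2 := by
  rw [toSet, interior_prod_eq, interior_Icc, interior_Icc]; rfl

lemma isClosed_toSet (A : Rect) : IsClosed A.toSet := isClosed_Icc.prod isClosed_Icc

lemma interior_inter_interior_eq_empty_iff {A B : Rect} :
    interior A.toSet ∩ interior B.toSet = ∅ ↔
      ¬(A.x1 < B.x2 ∧ B.x1 < A.x2 ∧ A.y1 < B.y2 ∧ B.y1 < A.y2) := by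
  rw [← not_nonempty_iff_eq_empty, not_iff_not]
  constructor
  · rintro ⟨p, hA, hB⟩
    rw [mem_interior_toSet] at hA hB
    exact ⟨by linarith, by linarith, by linarith, by linarith⟩
  · rintro ⟨hx, hx', hy, hy'⟩
    obtain ⟨x, hx1, hx2⟩ := exists_between
      (max_lt (lt_min A.hx hx) (lt_min hx' B.hx) : max A.x1 B.x1 < min A.x2 B.x2)
    obtain ⟨y, hy1, hy2⟩ := exists_between
      (max_lt (lt_min A.hy hy) (lt_min hy' B.hy) : max A.y1 B.y1 < min A.y2 B.y2)
    simp only [max_lt_iff, lt_min_iff] at hx1 hx2 hy1 hy2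
    exact ⟨(x, y), mem_interior_toSet.2 ⟨⟨hx1.1, hx2.1⟩, hy1.1, hy2.1⟩,
      mem_interior_toSet.2 ⟨⟨hx1.2, hx2.2⟩, hy1.2, hy2.2⟩⟩

/-- The mirror image of a rectangle in the diagonal `x = y`, which exchanges horizontal and vertical
contacts. -/
def swap (A : Rect) : Rect := ⟨A.y1, A.y2, A.x1, A.x2, A.hy, A.hx⟩

/-- The mirror image of a rectangle in the axis `x = 0`, which exchanges left and right. -/
def reflect (A : Rect) : Rect := ⟨-A.x2, -A.x1, A.y1, A.y2, neg_lt_neg A.hx, A.hy⟩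

@[simp] lemma reflect_reflect (A : Rect) : A.reflect.reflect = A := by
  simp [reflect]

lemma toSet_swap (A : Rect) : A.swap.toSet = Prod.swap ⁻¹' A.toSet :=
  (preimage_swap_prod _ _).symm

lemma mem_toSet_reflect {A : Rect} {p : ℝ × ℝ} :
    p ∈ A.reflect.toSet ↔ (-p.1, p.2) ∈ A.toSet := by
  simp only [mem_toSet, reflect, neg_le, le_neg, and_comm]

lemma area_swap (A : Rect) : A.swap.area = A.area := mul_comm _ _

lemma area_reflect (A : Rect) : A.reflect.area = A.area := by
  simp only [area, reflect]; ring

end Rect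

lemma preimage_swap_vseg (x c d : ℝ) : Prod.swap ⁻¹' vseg x c d = hseg c d x :=
  preimage_swap_prod _ _

lemma preimage_swap_hseg (a b y : ℝ) : Prod.swap ⁻¹' hseg a b y = vseg y a b :=
  preimage_swap_prod _ _

lemma preimage_swap_inj {S S' : Set (ℝ × ℝ)} :
    Prod.swap ⁻¹' S = Prod.swap ⁻¹' S' ↔ S = S' :=
  Prod.swap_surjective.preimage_injective.eq_iff

lemma vseg_subset_vseg_iff {x c d x' c' d' : ℝ} (h : c < d) :
    vseg x c d ⊆ vseg x' c' d' ↔ x = x' ∧ c' ≤ c ∧ d ≤ d' := by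
  rw [vseg, vseg, prod_subset_prod_iff' ((singleton_nonempty x).prod (nonempty_Icc.2 h.le)),
    singleton_subset_singleton, Icc_subset_Icc_iff h.le]

lemma vseg_eq_vseg_iff {x c d x' c' d' : ℝ} (h : c < d) :
    vseg x c d = vseg x' c' d' ↔ x = x' ∧ c = c' ∧ d = d' := by
  refine ⟨fun e => ?_, by rintro ⟨rfl, rfl, rfl⟩; rfl⟩
  obtain ⟨hx, hc, hd⟩ := (vseg_subset_vseg_iff h).1 e.subset
  obtain ⟨-, hc', hd'⟩ := (vseg_subset_vseg_iff (by linarith)).1 e.symm.subset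
  exact ⟨hx, hc'.antisymm hc, hd.antisymm hd'⟩

lemma exists_toSet_inter_vseg_eq_vseg_iff {A : Rect} {x c d : ℝ} :
    (∃ c' d', c' < d' ∧ A.toSet ∩ vseg x c d = vseg x c' d') ↔
      (A.x1 ≤ x ∧ x ≤ A.x2) ∧ max A.y1 c < min A.y2 d := by
  rw [Rect.toSet, vseg, prod_inter_prod, Icc_inter_Icc]
  constructor
  · rintro ⟨c', d', h, e⟩
    have hc := e.symm.subset (⟨rfl, left_mem_Icc.2 h.le⟩ : (x, c') ∈ vseg x c' d')
    have hd := e.symm.subset (⟨rfl, right_mem_Icc.2 h.le⟩ : (x, d') ∈ vseg x c' d')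
    exact ⟨hc.1.1, hc.2.1.trans_lt (h.trans_le hd.2.2)⟩
  · rintro ⟨hx, h⟩
    exact ⟨_, _, h, by rw [vseg, inter_eq_right.2 (singleton_subset_iff.2 (mem_Icc.2 hx))]⟩

lemma leftAdj_iff {A B : Rect} :
    LeftAdj A B ↔ A.x2 = B.x1 ∧ A.y1 < B.y2 ∧ B.y1 < A.y2 := by
  refine and_congr_right fun hx => ?_
  have hinter : A.toSet ∩ B.toSet = A.toSet ∩ vseg A.x2 B.y1 B.y2 := by
    ext p
    simp only [mem_inter_iff, Rect.mem_toSet, vseg, mem_prod, mem_singleton_iff, mem_Icc]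
    refine and_congr_right fun hA => and_congr_left fun _ => ⟨fun hB => ?_, fun hB => ?_⟩
    · exact hA.1.2.antisymm (hx ▸ hB.1)
    · exact ⟨(hB.trans hx).ge, by linarith [B.hx]⟩
  rw [hinter, exists_toSet_inter_vseg_eq_vseg_iff, max_lt_iff, lt_min_iff, lt_min_iff]
  exact ⟨fun h => ⟨h.2.1.2, h.2.2.1⟩,
    fun h => ⟨⟨A.hx.le, le_rfl⟩, ⟨A.hy, h.1⟩, h.2, B.hy⟩⟩

lemma belowAdj_iff_leftAdj_swap {A B : Rect} : BelowAdj A B ↔ LeftAdj A.swap B.swap := by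
  simp only [BelowAdj, LeftAdj, Rect.toSet_swap, ← preimage_inter, ← preimage_swap_hseg,
    preimage_swap_inj]
  rfl

lemma leftAdj_reflect {A B : Rect} : LeftAdj A.reflect B.reflect ↔ LeftAdj B A := by
  simp only [leftAdj_iff, Rect.reflect, neg_inj, eq_comm (a := A.x1), and_comm (a := A.y1 < B.y2)]

lemma leftAdj_reflect_swap {A B : Rect} :
    LeftAdj A.reflect.swap B.reflect.swap ↔ LeftAdj A.swap B.swap := by
  simp only [leftAdj_iff, Rect.reflect, Rect.swap, neg_lt_neg_iff, and_comm (a := A.x1 < B.x2)]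

lemma meetsLeftSide_iff {A F : Rect} : MeetsLeftSide A F ↔
    (A.x1 ≤ F.x1 ∧ F.x1 ≤ A.x2) ∧ max A.y1 F.y1 < min A.y2 F.y2 :=
  exists_toSet_inter_vseg_eq_vseg_iff

lemma meetsRightSide_iff_meetsLeftSide_reflect {A F : Rect} :
    MeetsRightSide A F ↔ MeetsLeftSide A.reflect F.reflect := by
  rw [meetsLeftSide_iff, MeetsRightSide, exists_toSet_inter_vseg_eq_vseg_iff]
  simp only [Rect.reflect, neg_le_neg_iff, and_comm]

lemma meetsBottomSide_iff_meetsLeftSide_swap {A F : Rect} :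
    MeetsBottomSide A F ↔ MeetsLeftSide A.swap F.swap := by
  simp only [MeetsBottomSide, MeetsLeftSide, Rect.toSet_swap, ← preimage_swap_hseg,
    ← preimage_inter, preimage_swap_inj]
  rfl

lemma meetsTopSide_iff_meetsRightSide_swap {A F : Rect} :
    MeetsTopSide A F ↔ MeetsRightSide A.swap F.swap := by
  simp only [MeetsTopSide, MeetsRightSide, Rect.toSet_swap, ← preimage_swap_hseg,
    ← preimage_inter, preimage_swap_inj]
  rfl

lemma meetsBottomSide_reflect {A F : Rect} :
    MeetsBottomSide A.reflect F.reflect ↔ MeetsBottomSide A F := by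
  simp only [meetsBottomSide_iff_meetsLeftSide_swap, meetsLeftSide_iff, Rect.swap, Rect.reflect,
    max_lt_iff, lt_min_iff, neg_lt_neg_iff]
  tauto

lemma meetsTopSide_reflect {A F : Rect} :
    MeetsTopSide A.reflect F.reflect ↔ MeetsTopSide A F := by
  simp only [meetsTopSide_iff_meetsRightSide_swap, meetsRightSide_iff_meetsLeftSide_reflect,
    meetsLeftSide_iff, Rect.swap, Rect.reflect, max_lt_iff, lt_min_iff, neg_lt_neg_iff]
  tauto

/-! ### Tilings and their symmetries -/

namespace Tiling

/-- The mirror image of a tiling in the diagonal `x = y`, which reduces horizontal segments to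
vertical ones. -/
def swap (T : Tiling I) : Tiling I where
  R i := (T.R i).swap
  F := T.F.swap
  disj i j hij := Rect.interior_inter_interior_eq_empty_iff.2 fun ⟨hx, hx', hy, hy'⟩ =>
    Rect.interior_inter_interior_eq_empty_iff.1 (T.disj hij) ⟨hy, hy', hx, hx'⟩
  union := by simp only [Rect.toSet_swap, ← preimage_iUnion, T.union]

/-- The mirror image of a tiling in the axis `x = 0`, which exchanges left and right. -/
def reflect (T : Tiling I) : Tiling I where
  R i := (T.R i).reflect
  F := T.F.reflect
  disj i j hij := Rect.interior_inter_interior_eq_empty_iff.2 fun ⟨hx, hx', hy, hy'⟩ =>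
    Rect.interior_inter_interior_eq_empty_iff.1 (T.disj hij)
      ⟨neg_lt_neg_iff.1 hx', neg_lt_neg_iff.1 hx, hy, hy'⟩
  union := by
    ext p
    simp only [mem_iUnion, Rect.mem_toSet_reflect, ← T.union]

variable (T : Tiling I)

lemma R_subset_F (i : I) : (T.R i).toSet ⊆ T.F.toSet :=
  (subset_iUnion (fun i => (T.R i).toSet) i).trans T.union.subset

lemma F_x1_le (i : I) : T.F.x1 ≤ (T.R i).x1 :=
  (T.R_subset_F i (show ((T.R i).x1, (T.R i).y1) ∈ (T.R i).toSet from
    ⟨left_mem_Icc.2 (T.R i).hx.le, left_mem_Icc.2 (T.R i).hy.le⟩)).1.1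

lemma le_F_x2 (i : I) : (T.R i).x2 ≤ T.F.x2 := neg_le_neg_iff.1 (T.reflect.F_x1_le i)

lemma F_y1_le (i : I) : T.F.y1 ≤ (T.R i).y1 := T.swap.F_x1_le i

lemma le_F_y2 (i : I) : (T.R i).y2 ≤ T.F.y2 := T.swap.le_F_x2 i

variable {T}

lemma eq_of_overlap {i j : I} (hx : (T.R i).x1 < (T.R j).x2) (hx' : (T.R j).x1 < (T.R i).x2)
    (hy : (T.R i).y1 < (T.R j).y2) (hy' : (T.R j).y1 < (T.R i).y2) : i = j := by
  by_contra hij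
  exact Rect.interior_inter_interior_eq_empty_iff.1 (T.disj hij) ⟨hx, hx', hy, hy'⟩

lemma eq_of_x1_eq_x1 {i j : I} (hx : (T.R i).x1 = (T.R j).x1) (hy : (T.R i).y1 < (T.R j).y2)
    (hy' : (T.R j).y1 < (T.R i).y2) : i = j :=
  eq_of_overlap (hx.trans_lt (T.R j).hx) (hx.symm.trans_lt (T.R i).hx) hy hy'

lemma eq_of_x2_eq_x2 {i j : I} (hx : (T.R i).x2 = (T.R j).x2) (hy : (T.R i).y1 < (T.R j).y2)
    (hy' : (T.R j).y1 < (T.R i).y2) : i = j :=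
  eq_of_overlap ((T.R i).hx.trans_eq hx) ((T.R j).hx.trans_eq hx.symm) hy hy'

/-- The rectangle extending to the upper right of a given point is found by letting points
approach that point along the diagonal. -/
lemma exists_mem_Ico_Ico {x y : ℝ} (hx : x ∈ Ico T.F.x1 T.F.x2) (hy : y ∈ Ico T.F.y1 T.F.y2) :
    ∃ i, x ∈ Ico (T.R i).x1 (T.R i).x2 ∧ y ∈ Ico (T.R i).y1 (T.R i).y2 := by
  have hlim : Filter.Tendsto (fun ε : ℝ => (x + ε, y + ε)) (nhdsWithin 0 (Ioi 0))
      (nhds (x, y)) := by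
    have hcont : Continuous fun ε : ℝ => (x + ε, y + ε) := by fun_prop
    simpa using (hcont.tendsto 0).mono_left nhdsWithin_le_nhds
  have hmem : ∀ᶠ ε in nhdsWithin (0 : ℝ) (Ioi 0), ∃ i, (x + ε, y + ε) ∈ (T.R i).toSet := by
    have hlt : (0 : ℝ) < min (T.F.x2 - x) (T.F.y2 - y) :=
      lt_min (sub_pos.2 hx.2) (sub_pos.2 hy.2)
    filter_upwards [Ioo_mem_nhdsGT hlt] with ε hε
    have hε' := lt_min_iff.1 hε.2
    rw [← mem_iUnion, T.union]
    exact ⟨⟨by linarith [hx.1, hε.1], by linarith⟩, by linarith [hy.1, hε.1], by linarith⟩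
  obtain ⟨i, hi⟩ := Filter.frequently_exists.1 hmem.frequently
  have hxy := Rect.mem_toSet.1 ((T.R i).isClosed_toSet.mem_of_frequently_of_tendsto hi hlim)
  obtain ⟨ε, hεi, hε : 0 < ε⟩ := (hi.and_eventually self_mem_nhdsWithin).exists
  exact ⟨i, ⟨hxy.1.1, (lt_add_of_pos_right x hε).trans_le hεi.1.2⟩,
    hxy.2.1, (lt_add_of_pos_right y hε).trans_le hεi.2.2⟩

lemma exists_mem_Ioc_Ico {x y : ℝ} (hx : x ∈ Ioc T.F.x1 T.F.x2) (hy : y ∈ Ico T.F.y1 T.F.y2) :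
    ∃ i, x ∈ Ioc (T.R i).x1 (T.R i).x2 ∧ y ∈ Ico (T.R i).y1 (T.R i).y2 := by
  obtain ⟨i, hxi, hyi⟩ :=
    T.reflect.exists_mem_Ico_Ico (x := -x) ⟨neg_le_neg hx.2, neg_lt_neg hx.1⟩ hy
  exact ⟨i, ⟨neg_lt_neg_iff.1 hxi.2, neg_le_neg_iff.1 hxi.1⟩, hyi⟩

lemma exists_mem_Ico_Ioc {x y : ℝ} (hx : x ∈ Ico T.F.x1 T.F.x2) (hy : y ∈ Ioc T.F.y1 T.F.y2) :
    ∃ i, x ∈ Ico (T.R i).x1 (T.R i).x2 ∧ y ∈ Ioc (T.R i).y1 (T.R i).y2 := by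
  obtain ⟨i, hyi, hxi⟩ := T.swap.exists_mem_Ioc_Ico hy hx
  exact ⟨i, hxi, hyi⟩

lemma exists_mem_Ioc_Ioc {x y : ℝ} (hx : x ∈ Ioc T.F.x1 T.F.x2) (hy : y ∈ Ioc T.F.y1 T.F.y2) :
    ∃ i, x ∈ Ioc (T.R i).x1 (T.R i).x2 ∧ y ∈ Ioc (T.R i).y1 (T.R i).y2 := by
  obtain ⟨i, hxi, hyi⟩ :=
    T.reflect.exists_mem_Ico_Ioc (x := -x) ⟨neg_le_neg hx.2, neg_lt_neg hx.1⟩ hy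
  exact ⟨i, ⟨neg_lt_neg_iff.1 hxi.2, neg_le_neg_iff.1 hxi.1⟩, hyi⟩

lemma meetsLeftSide_R_iff {i : I} : MeetsLeftSide (T.R i) T.F ↔ (T.R i).x1 = T.F.x1 := by
  have hx1 := T.F_x1_le i
  have hy1 := T.F_y1_le i
  have hy2 := T.le_F_y2 i
  rw [meetsLeftSide_iff, max_eq_left hy1, min_eq_left hy2]
  exact ⟨fun h => h.1.1.antisymm hx1,
    fun h => ⟨⟨h.le, h.symm.le.trans (T.R i).hx.le⟩, (T.R i).hy⟩⟩

lemma meetsRightSide_R_iff {i : I} : MeetsRightSide (T.R i) T.F ↔ (T.R i).x2 = T.F.x2 := by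
  rw [meetsRightSide_iff_meetsLeftSide_reflect]
  exact T.reflect.meetsLeftSide_R_iff.trans neg_inj

end Tiling

section Symmetries

variable {T T' : Tiling I}

lemma WeakEquiv.swap (h : WeakEquiv T T') : WeakEquiv T.swap T'.swap := by
  obtain ⟨hleft, hbelow, hL, hR, hT, hB⟩ := h
  simp only [belowAdj_iff_leftAdj_swap] at hbelow
  simp only [meetsBottomSide_iff_meetsLeftSide_swap] at hB
  simp only [meetsTopSide_iff_meetsRightSide_swap] at hT
  refine ⟨hbelow, fun i j => ?_, hB, hT, fun i => ?_, fun i => ?_⟩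
  · simp only [belowAdj_iff_leftAdj_swap]
    exact hleft i j
  · simp only [meetsTopSide_iff_meetsRightSide_swap]
    exact hR i
  · simp only [meetsBottomSide_iff_meetsLeftSide_swap]
    exact hL i

lemma WeakEquiv.reflect (h : WeakEquiv T T') : WeakEquiv T.reflect T'.reflect := by
  obtain ⟨hleft, hbelow, hL, hR, hT, hB⟩ := h
  simp only [belowAdj_iff_leftAdj_swap] at hbelow
  simp only [meetsRightSide_iff_meetsLeftSide_reflect] at hR
  refine ⟨fun i j => ?_, fun i j => ?_, hR, fun i => ?_, fun i => ?_, fun i => ?_⟩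
  · exact leftAdj_reflect.trans ((hleft j i).trans leftAdj_reflect.symm)
  · simp only [belowAdj_iff_leftAdj_swap]
    exact leftAdj_reflect_swap.trans ((hbelow i j).trans leftAdj_reflect_swap.symm)
  · simp only [meetsRightSide_iff_meetsLeftSide_reflect, Tiling.reflect, Rect.reflect_reflect]
    exact hL i
  · exact meetsTopSide_reflect.trans ((hT i).trans meetsTopSide_reflect.symm)
  · exact meetsBottomSide_reflect.trans ((hB i).trans meetsBottomSide_reflect.symm)

lemma AreaUniversal.swap (h : AreaUniversal T) : AreaUniversal T.swap := fun w hw =>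
  let ⟨T', hT', harea⟩ := h w hw
  ⟨T'.swap, hT'.swap, fun i => (T'.R i).area_swap.trans (harea i)⟩

lemma AreaUniversal.reflect (h : AreaUniversal T) : AreaUniversal T.reflect := fun w hw =>
  let ⟨T', hT', harea⟩ := h w hw
  ⟨T'.reflect, hT'.reflect, fun i => (T'.R i).area_reflect.trans (harea i)⟩

lemma Generic.swap (h : Generic T) : Generic T.swap := fun p s hs =>
  h p.swap s fun i hi => (T.R i).toSet_swap.subset (hs i hi)

lemma Generic.reflect (h : Generic T) : Generic T.reflect := fun p s hs =>
  h (-p.1, p.2) s fun i hi => Rect.mem_toSet_reflect.1 (hs i hi)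

lemma Generic.eq_of_mem (h : Generic T) {p : ℝ × ℝ} {i j k l : I} (hi : p ∈ (T.R i).toSet)
    (hj : p ∈ (T.R j).toSet) (hk : p ∈ (T.R k).toSet) (hl : p ∈ (T.R l).toSet) (hij : i ≠ j)
    (hik : i ≠ k) (hil : i ≠ l) (hjk : j ≠ k) (hjl : j ≠ l) : k = l := by
  classical
  by_contra hkl
  have hcard := h p {i, j, k, l} (by simp [hi, hj, hk, hl])
  simp [*] at hcard

end Symmetries

/-! ### Finite chains -/

/-- The finite set `N` is listed from `first` to `last` by the successor relation `S`. Only the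
existence and uniqueness of successors and predecessors is recorded: additional cycles do not
affect telescoping sums. -/
structure IsFinChain {ι : Type*} (N : Finset ι) (S : ι → ι → Prop) (first last : ι) : Prop where
  first_mem : first ∈ N
  last_mem : last ∈ N
  existsUnique_next : ∀ j ∈ N, j ≠ last → ∃! k, k ∈ N ∧ k ≠ first ∧ S j k
  existsUnique_prev : ∀ k ∈ N, k ≠ first → ∃! j, j ∈ N ∧ j ≠ last ∧ S j k

namespace IsFinChain

variable {ι : Type*} {N : Finset ι} {S : ι → ι → Prop} {first last : ι}

lemma sum_sub {M : Type*} [AddCommGroup M] (h : IsFinChain N S first last) {f g : ι → M}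
    (hfg : ∀ j ∈ N, ∀ k ∈ N, S j k → f j = g k) :
    ∑ j ∈ N, (f j - g j) = f last - g first := by
  classical
  have hshift : ∑ j ∈ N.erase last, f j = ∑ k ∈ N.erase first, g k := by
    choose! next hnext _ using h.existsUnique_next
    have hmem : ∀ j ∈ N.erase last, next j ∈ N ∧ next j ≠ first ∧ S j (next j) := fun j hj =>
      hnext j (Finset.mem_of_mem_erase hj) (Finset.ne_of_mem_erase hj)
    refine Finset.sum_bij (fun j _ => next j) (fun j hj => ?_) (fun j hj k hk hjk => ?_)
      (fun k hk => ?_) (fun j hj => ?_)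
    · exact Finset.mem_erase.2 ⟨(hmem j hj).2.1, (hmem j hj).1⟩
    · obtain ⟨hnj, hnf, hSj⟩ := hmem j hj
      rw [Finset.mem_erase] at hj hk
      exact (h.existsUnique_prev _ hnj hnf).unique ⟨hj.2, hj.1, hSj⟩
        ⟨hk.2, hk.1, hjk ▸ (hnext k hk.2 hk.1).2.2⟩
    · rw [Finset.mem_erase] at hk
      obtain ⟨j, ⟨hjN, hjl, hSj⟩, -⟩ := h.existsUnique_prev k hk.2 hk.1
      exact ⟨j, Finset.mem_erase.2 ⟨hjl, hjN⟩, (h.existsUnique_next j hjN hjl).unique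
        (hnext j hjN hjl) ⟨hk.2, hk.1, hSj⟩⟩
    · exact hfg j (Finset.mem_of_mem_erase hj) _ (hmem j hj).1 (hmem j hj).2.2
  rw [Finset.sum_sub_distrib, ← Finset.add_sum_erase N f h.last_mem,
    ← Finset.add_sum_erase N g h.first_mem, hshift, add_sub_add_right_eq_sub]

variable {α : Type*} [LinearOrder α] {lo hi : ι → α}

lemma card_filter_mem_Ico (h : IsFinChain N S first last) (hle : ∀ j ∈ N, lo j ≤ hi j)
    (hS : ∀ j ∈ N, ∀ k ∈ N, S j k → hi j = lo k) (y : α) :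
    ((N.filter fun j => y ∈ Ico (lo j) (hi j)).card : ℤ) =
      (if y < hi last then 1 else 0) - (if y < lo first then 1 else 0) := by
  rw [Finset.natCast_card_filter, ← h.sum_sub (f := fun j => if y < hi j then (1 : ℤ) else 0)
    (g := fun j => if y < lo j then 1 else 0) fun j hj k hk hjk => by rw [hS j hj k hk hjk]]
  refine Finset.sum_congr rfl fun j hj => ?_
  have := hle j hj
  simp only [mem_Ico]
  grind

lemma existsUnique_mem_Ico (h : IsFinChain N S first last) (hle : ∀ j ∈ N, lo j ≤ hi j)
    (hS : ∀ j ∈ N, ∀ k ∈ N, S j k → hi j = lo k) {y : α} (hy : y ∈ Ico (lo first) (hi last)) :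
    ∃! j, j ∈ N ∧ y ∈ Ico (lo j) (hi j) := by
  have hcard := h.card_filter_mem_Ico hle hS y
  rw [if_pos hy.2, if_neg hy.1.not_gt, sub_zero, Nat.cast_eq_one,
    Finset.card_eq_one_iff_existsUnique] at hcard
  simpa only [Finset.mem_filter] using hcard

lemma Ico_subset (h : IsFinChain N S first last) (hle : ∀ j ∈ N, lo j ≤ hi j)
    (hS : ∀ j ∈ N, ∀ k ∈ N, S j k → hi j = lo k) {j : ι} (hj : j ∈ N) :
    Ico (lo j) (hi j) ⊆ Ico (lo first) (hi last) := by
  intro y hy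
  have hpos : 0 < (N.filter fun j => y ∈ Ico (lo j) (hi j)).card :=
    Finset.card_pos.2 ⟨j, Finset.mem_filter.2 ⟨hj, hy⟩⟩
  have hcard := h.card_filter_mem_Ico hle hS y
  rw [mem_Ico]
  split_ifs at hcard <;> grind

end IsFinChain

/-! ### Neighbours, stacks and layouts -/

namespace Tiling

variable {T : Tiling I} {i j : I} {y : ℝ}

lemma exists_leftAdj_mem_Ico (h : (T.R i).x2 < T.F.x2) (hy : y ∈ Ico (T.R i).y1 (T.R i).y2) :
    ∃ k, LeftAdj (T.R i) (T.R k) ∧ y ∈ Ico (T.R k).y1 (T.R k).y2 := by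
  obtain ⟨k, hxk, hyk⟩ := T.exists_mem_Ico_Ico
    ⟨(T.F_x1_le i).trans (T.R i).hx.le, h⟩
    ⟨(T.F_y1_le i).trans hy.1, hy.2.trans_le (T.le_F_y2 i)⟩
  have hik : (T.R i).x2 = (T.R k).x1 := by
    by_contra hne
    have := T.eq_of_overlap ((T.R i).hx.trans hxk.2) (lt_of_le_of_ne hxk.1 (Ne.symm hne))
      (hy.1.trans_lt hyk.2) (hyk.1.trans_lt hy.2)
    exact hxk.2.ne (this ▸ rfl)
  exact ⟨k, leftAdj_iff.2 ⟨hik, hy.1.trans_lt hyk.2, hyk.1.trans_lt hy.2⟩, hyk⟩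

lemma exists_leftAdj_mem_Ioc (h : (T.R i).x2 < T.F.x2) (hy : y ∈ Ioc (T.R i).y1 (T.R i).y2) :
    ∃ k, LeftAdj (T.R i) (T.R k) ∧ y ∈ Ioc (T.R k).y1 (T.R k).y2 := by
  obtain ⟨k, hik, hk⟩ := T.swap.reflect.swap.exists_leftAdj_mem_Ico (i := i) (y := -y) h
    ⟨neg_le_neg hy.2, neg_lt_neg hy.1⟩
  exact ⟨k, leftAdj_reflect_swap.1 hik, neg_lt_neg_iff.1 hk.2, neg_le_neg_iff.1 hk.1⟩

lemma exists_leftAdj (h : T.F.x1 < (T.R i).x1) : ∃ k, LeftAdj (T.R k) (T.R i) := by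
  obtain ⟨k, hik, -⟩ := T.reflect.exists_leftAdj_mem_Ico (i := i) (neg_lt_neg h)
    (left_mem_Ico.2 (T.R i).hy)
  exact ⟨k, leftAdj_reflect.1 hik⟩

lemma x2_lt_of_leftAdj (h : LeftAdj (T.R i) (T.R j)) : (T.R i).x2 < T.F.x2 :=
  h.1 ▸ (T.R j).hx.trans_le (T.le_F_x2 j)

lemma lt_x1_of_leftAdj (h : LeftAdj (T.R i) (T.R j)) : T.F.x1 < (T.R j).x1 :=
  h.1 ▸ (T.F_x1_le i).trans_lt (T.R i).hx

/-- The hypotheses say that the left sides of the rectangles in `N` tile the segment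
`{x} × [C, D]`. -/
lemma exists_isFinChain_of_stack {N : Finset I} {x C D : ℝ} (hCD : C < D)
    (hx : ∀ j ∈ N, (T.R j).x1 = x) (hC : ∀ j ∈ N, C ≤ (T.R j).y1) (hD : ∀ j ∈ N, (T.R j).y2 ≤ D)
    (hIco : ∀ y ∈ Ico C D, ∃ k ∈ N, y ∈ Ico (T.R k).y1 (T.R k).y2)
    (hIoc : ∀ y ∈ Ioc C D, ∃ k ∈ N, y ∈ Ioc (T.R k).y1 (T.R k).y2) :
    ∃ first ∈ N, ∃ last ∈ N, (T.R first).y1 = C ∧ (T.R last).y2 = D ∧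
      IsFinChain N (fun j k => LeftAdj (T.swap.R j) (T.swap.R k)) first last := by
  have hlt : ∀ j ∈ N, ∀ k ∈ N, (T.R j).x1 < (T.R k).x2 := fun j hj k hk =>
    (hx j hj).trans_lt (hx k hk ▸ (T.R k).hx)
  have hadj : ∀ j ∈ N, ∀ k ∈ N,
      LeftAdj (T.swap.R j) (T.swap.R k) ↔ (T.R j).y2 = (T.R k).y1 := fun j hj k hk =>
    leftAdj_iff.trans (and_iff_left ⟨hlt j hj k hk, hlt k hk j hj⟩)
  have hinj : ∀ j ∈ N, ∀ k ∈ N, (T.R j).y1 < (T.R k).y2 → (T.R k).y1 < (T.R j).y2 → j = k :=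
    fun j hj k hk => T.eq_of_overlap (hlt j hj k hk) (hlt k hk j hj)
  have hy := fun k => (T.R k).hy
  obtain ⟨first, hfirst, hfC⟩ := hIco C (left_mem_Ico.2 hCD)
  obtain ⟨last, hlast, hlD⟩ := hIoc D (right_mem_Ioc.2 hCD)
  refine ⟨first, hfirst, last, hlast, hfC.1.antisymm (hC _ hfirst), (hD _ hlast).antisymm hlD.2,
    hfirst, hlast, fun j hj hne => ?_, fun k hk hne => ?_⟩
  · have hjD : (T.R j).y2 < D := (hD j hj).lt_of_ne fun h => hne <|
      hinj j hj last hlast (by grind) (by grind)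
    obtain ⟨k, hk, hjk⟩ := hIco (T.R j).y2 ⟨(hC j hj).trans (hy j).le, hjD⟩
    refine ⟨k, ⟨hk, ?_, (hadj j hj k hk).2 ?_⟩, fun k' hk' => ?_⟩ <;> grind
  · have hkC : C < (T.R k).y1 := (hC k hk).lt_of_ne fun h => hne <|
      hinj k hk first hfirst (by grind) (by grind)
    obtain ⟨j, hj, hjk⟩ := hIoc (T.R k).y1 ⟨hkC, (hy k).le.trans (hD k hk)⟩
    refine ⟨j, ⟨hj, ?_, (hadj j hj k hk).2 ?_⟩, fun j' hj' => ?_⟩ <;> grind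

/-- Horizontal coordinates `[l i, r i] ⊆ [L, R]` for the rectangles of `T`, compatible with the
horizontal contacts of `T`. Widths may vanish, so that layouts in a fixed frame form a compact set.
Layouts of `T.swap` provide vertical coordinates. -/
structure IsLayout (T : Tiling I) (l r : I → ℝ) (L R : ℝ) : Prop where
  le : ∀ i, l i ≤ r i
  adj : ∀ i j, LeftAdj (T.R i) (T.R j) → r i = l j
  left : ∀ i, (T.R i).x1 = T.F.x1 → l i = L
  right : ∀ i, (T.R i).x2 = T.F.x2 → r i = R

/-- The vertical ranges of two horizontal neighbours are nested: no two sides on a common vertical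
line overlap only partially. -/
def NestedContacts (T : Tiling I) : Prop :=
  ∀ i j, LeftAdj (T.R i) (T.R j) →
    ((T.R i).y1 ≤ (T.R j).y1 ∧ (T.R j).y2 ≤ (T.R i).y2) ∨
    ((T.R j).y1 ≤ (T.R i).y1 ∧ (T.R i).y2 ≤ (T.R j).y2)

lemma NestedContacts.reflect (h : NestedContacts T) : NestedContacts T.reflect :=
  fun i j hij => (h j i (leftAdj_reflect.1 hij)).symm

namespace IsLayout

variable {l r b t : I → ℝ} {L R B H : ℝ}

lemma reflect (h : T.IsLayout l r L R) :
    T.reflect.IsLayout (fun i => -r i) (fun i => -l i) (-R) (-L) where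
  le i := neg_le_neg (h.le i)
  adj i j hij := congrArg Neg.neg (h.adj j i (leftAdj_reflect.1 hij)).symm
  left i hi := congrArg Neg.neg (h.right i (neg_inj.1 hi))
  right i hi := congrArg Neg.neg (h.left i (neg_inj.1 hi))

lemma reflect_swap (h : T.swap.IsLayout b t B H) : T.reflect.swap.IsLayout b t B H where
  le := h.le
  adj i j hij := h.adj i j (leftAdj_reflect_swap.1 hij)
  left := h.left
  right := h.right

/-- The first rectangle violating the bound would have a left neighbour violating it as well. -/
lemma le_left (h : T.IsLayout l r L R) (i : I) : L ≤ l i := by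
  by_contra hi
  obtain ⟨j, hj, hmin⟩ := Finset.exists_min_image (Finset.univ.filter fun k => l k < L)
    (fun k => (T.R k).x1) ⟨i, by simpa using hi⟩
  have hj : l j < L := by simpa using hj
  obtain ⟨k, hkj⟩ := T.exists_leftAdj <| (T.F_x1_le j).lt_of_ne fun e => hj.ne (h.left j e.symm)
  have hk : l k < L := (h.le k).trans_lt (h.adj k j hkj ▸ hj)
  exact (hmin k (by simpa using hk)).not_gt (hkj.1 ▸ (T.R k).hx)

lemma right_le (h : T.IsLayout l r L R) (i : I) : r i ≤ R := neg_le_neg_iff.1 (h.reflect.le_left i)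

/-- Genericity leaves only one rectangle below a point where the lower sides of two horizontal
neighbours meet. -/
lemma bottom_eq (hgen : Generic T) (h : T.swap.IsLayout b t B H)
    (hij : LeftAdj (T.R i) (T.R j)) (hy : (T.R i).y1 = (T.R j).y1) : b i = b j := by
  rcases (T.F_y1_le i).eq_or_lt with hB | hB
  · exact (h.left i hB.symm).trans (h.left j (hB.trans hy).symm).symm
  obtain ⟨hx, -, -⟩ := leftAdj_iff.1 hij
  have hyF : (T.R i).y1 ∈ Ioc T.F.y1 T.F.y2 := ⟨hB, (T.R i).hy.le.trans (T.le_F_y2 i)⟩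
  have hlt := T.lt_x1_of_leftAdj hij
  have hlt' := T.x2_lt_of_leftAdj hij
  obtain ⟨c, hcx, hcy⟩ := T.exists_mem_Ico_Ioc (x := (T.R i).x2) ⟨by linarith, hlt'⟩ hyF
  obtain ⟨d, hdx, hdy⟩ := T.exists_mem_Ioc_Ioc (x := (T.R i).x2) ⟨by linarith, hlt'.le⟩ hyF
  have hi := (T.R i).hx
  have hi' := (T.R i).hy
  have hj := (T.R j).hx
  have hj' := (T.R j).hy
  obtain rfl : c = d := by
    refine hgen.eq_of_mem (p := ((T.R i).x2, (T.R i).y1)) (i := i) (j := j)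
      (Rect.mem_toSet.2 ?_) (Rect.mem_toSet.2 ?_) (Rect.mem_toSet.2 ?_) (Rect.mem_toSet.2 ?_)
      ?_ ?_ ?_ ?_ ?_ <;> grind
  have hcy2 : (T.R c).y2 = (T.R i).y1 := by
    refine hcy.2.antisymm' (not_lt.1 fun hlt => ?_)
    have := T.eq_of_overlap (i := c) (j := i) hdx.1 (by linarith [hcx.2]) (by linarith [hcy.1]) hlt
    exact hcx.2.ne (this ▸ rfl)
  rw [← h.adj c i (leftAdj_iff.2 ⟨hcy2, hdx.1, hi.trans hcx.2⟩),
    h.adj c j (leftAdj_iff.2 ⟨hcy2.trans hy, (hdx.1.trans_eq hx).trans hj,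
      hx.symm.trans_lt hcx.2⟩)]

lemma top_eq (hgen : Generic T) (h : T.swap.IsLayout b t B H)
    (hij : LeftAdj (T.R i) (T.R j)) (hy : (T.R i).y2 = (T.R j).y2) : t i = t j :=
  neg_inj.1 <| bottom_eq (T := T.swap.reflect.swap) hgen.swap.reflect.swap h.reflect
    (leftAdj_reflect_swap.2 hij) (neg_inj.2 hy)

lemma exists_isFinChain_right (hgen : Generic T) (hnest : NestedContacts T)
    (h : T.swap.IsLayout b t B H) (hij : LeftAdj (T.R i) (T.R j))
    (hy1 : (T.R i).y1 ≤ (T.R j).y1) (hy2 : (T.R j).y2 ≤ (T.R i).y2) :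
    ∃ N : Finset I, (∀ k, k ∈ N ↔ LeftAdj (T.R i) (T.R k)) ∧ ∃ first last,
      b first = b i ∧ t last = t i ∧
      IsFinChain N (fun j k => LeftAdj (T.swap.R j) (T.swap.R k)) first last := by
  classical
  obtain ⟨N, hN⟩ : ∃ N : Finset I, ∀ k, k ∈ N ↔ LeftAdj (T.R i) (T.R k) :=
    ⟨Finset.univ.filter fun k => LeftAdj (T.R i) (T.R k), by simp⟩
  have hsub : ∀ k ∈ N, (T.R i).y1 ≤ (T.R k).y1 ∧ (T.R k).y2 ≤ (T.R i).y2 := by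
    intro k hk
    have hik := (hN k).1 hk
    rcases hnest i k hik with hk | hk
    · exact hk
    · have hj := (T.R j).hy
      rw [T.eq_of_x1_eq_x1 (hik.1.symm.trans hij.1) (by linarith) (by linarith)]
      exact ⟨hy1, hy2⟩
  have hi := T.x2_lt_of_leftAdj hij
  obtain ⟨first, hfirst, last, hlast, hC, hD, hchain⟩ := T.exists_isFinChain_of_stack (N := N)
    (T.R i).hy (fun k hk => ((hN k).1 hk).1.symm) (fun k hk => (hsub k hk).1)
    (fun k hk => (hsub k hk).2)
    (fun y hy => (T.exists_leftAdj_mem_Ico hi hy).imp fun k hk => ⟨(hN k).2 hk.1, hk.2⟩)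
    (fun y hy => (T.exists_leftAdj_mem_Ioc hi hy).imp fun k hk => ⟨(hN k).2 hk.1, hk.2⟩)
  exact ⟨N, hN, first, last, (h.bottom_eq hgen ((hN _).1 hfirst) hC.symm).symm,
    (h.top_eq hgen ((hN _).1 hlast) hD.symm).symm, hchain⟩

lemma Ico_subset_of_leftAdj (hgen : Generic T) (hnest : NestedContacts T)
    (h : T.swap.IsLayout b t B H) (hij : LeftAdj (T.R i) (T.R j))
    (hy1 : (T.R i).y1 ≤ (T.R j).y1) (hy2 : (T.R j).y2 ≤ (T.R i).y2) :
    Ico (b j) (t j) ⊆ Ico (b i) (t i) := by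
  obtain ⟨N, hN, first, last, hb, ht, hchain⟩ :=
    h.exists_isFinChain_right hgen hnest hij hy1 hy2
  rw [← hb, ← ht]
  exact hchain.Ico_subset (fun k _ => h.le k) (fun j _ k _ => h.adj j k) ((hN j).2 hij)

lemma Ico_nested (hgen : Generic T) (hnest : NestedContacts T) (h : T.swap.IsLayout b t B H)
    (hij : LeftAdj (T.R i) (T.R j)) :
    Ico (b j) (t j) ⊆ Ico (b i) (t i) ∨ Ico (b i) (t i) ⊆ Ico (b j) (t j) :=
  (hnest i j hij).imp (fun hy => h.Ico_subset_of_leftAdj hgen hnest hij hy.1 hy.2) fun hy =>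
    h.reflect_swap.Ico_subset_of_leftAdj hgen.reflect hnest.reflect (leftAdj_reflect.2 hij)
      hy.1 hy.2

lemma existsUnique_right (hgen : Generic T) (hnest : NestedContacts T)
    (h : T.swap.IsLayout b t B H) (hi : (T.R i).x2 < T.F.x2) (hy : y ∈ Ico (b i) (t i)) :
    ∃! k, LeftAdj (T.R i) (T.R k) ∧ y ∈ Ico (b k) (t k) := by
  obtain ⟨j, hij, -⟩ := T.exists_leftAdj_mem_Ico hi (left_mem_Ico.2 (T.R i).hy)
  rcases hnest i j hij with hji | hji
  · obtain ⟨N, hN, first, last, hb, ht, hchain⟩ :=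
      h.exists_isFinChain_right hgen hnest hij hji.1 hji.2
    rw [← hb, ← ht] at hy
    simpa only [hN] using
      hchain.existsUnique_mem_Ico (fun k _ => h.le k) (fun j _ k _ => h.adj j k) hy
  · refine ⟨j, ⟨hij, h.reflect_swap.Ico_subset_of_leftAdj hgen.reflect hnest.reflect
      (leftAdj_reflect.2 hij) hji.1 hji.2 hy⟩, fun k ⟨hik, _⟩ => ?_⟩
    obtain ⟨hx, hik1, hik2⟩ := leftAdj_iff.1 hik
    exact T.eq_of_x1_eq_x1 (hx.symm.trans hij.1) (by linarith) (by linarith)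

lemma existsUnique_left (hgen : Generic T) (hnest : NestedContacts T)
    (h : T.swap.IsLayout b t B H) (hi : T.F.x1 < (T.R i).x1) (hy : y ∈ Ico (b i) (t i)) :
    ∃! k, LeftAdj (T.R k) (T.R i) ∧ y ∈ Ico (b k) (t k) := by
  have := h.reflect_swap.existsUnique_right hgen.reflect hnest.reflect (neg_lt_neg hi) hy
  simpa only [Tiling.reflect, leftAdj_reflect] using this

lemma existsUnique_left_side (h : T.swap.IsLayout b t B H) (hy : y ∈ Ico B H) :
    ∃! k, (T.R k).x1 = T.F.x1 ∧ y ∈ Ico (b k) (t k) := by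
  have hx := left_mem_Ico.2 T.F.hx
  obtain ⟨first, -, last, -, hC, hD, hchain⟩ := T.exists_isFinChain_of_stack
    (N := Finset.univ.filter fun k => (T.R k).x1 = T.F.x1) T.F.hy
    (fun k hk => (Finset.mem_filter.1 hk).2) (fun k _ => T.F_y1_le k) (fun k _ => T.le_F_y2 k)
    (fun y hy => (T.exists_mem_Ico_Ico hx hy).imp fun k hk =>
      ⟨by simpa using hk.1.1.antisymm (T.F_x1_le k), hk.2⟩)
    (fun y hy => (T.exists_mem_Ico_Ioc hx hy).imp fun k hk =>
      ⟨by simpa using hk.1.1.antisymm (T.F_x1_le k), hk.2⟩)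
  rw [← h.left first hC, ← h.right last hD] at hy
  simpa using hchain.existsUnique_mem_Ico (fun k _ => h.le k) (fun j _ k _ => h.adj j k) hy

lemma existsUnique_right_side (h : T.swap.IsLayout b t B H) (hy : y ∈ Ico B H) :
    ∃! k, (T.R k).x2 = T.F.x2 ∧ y ∈ Ico (b k) (t k) := by
  simpa only [Tiling.reflect, Rect.reflect, neg_inj] using
    h.reflect_swap.existsUnique_left_side hy

lemma exists_isFinChain_row (hgen : Generic T) (hnest : NestedContacts T)
    (h : T.swap.IsLayout b t B H) (hy : y ∈ Ico B H) :
    ∃ N : Finset I, (∀ k, k ∈ N ↔ y ∈ Ico (b k) (t k)) ∧ ∃ first last,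
      (T.R first).x1 = T.F.x1 ∧ (T.R last).x2 = T.F.x2 ∧
      IsFinChain N (fun j k => LeftAdj (T.R j) (T.R k)) first last := by
  obtain ⟨N, hN⟩ : ∃ N : Finset I, ∀ k, k ∈ N ↔ y ∈ Ico (b k) (t k) :=
    ⟨Finset.univ.filter fun k => y ∈ Ico (b k) (t k), by simp⟩
  obtain ⟨first, hfirst, hfirst'⟩ := h.existsUnique_left_side hy
  obtain ⟨last, hlast, hlast'⟩ := h.existsUnique_right_side hy
  have hne_first : ∀ j k, LeftAdj (T.R j) (T.R k) → k ≠ first := fun j k hjk e =>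
    (T.lt_x1_of_leftAdj hjk).ne' (e ▸ hfirst.1)
  have hne_last : ∀ j k, LeftAdj (T.R j) (T.R k) → j ≠ last := fun j k hjk e =>
    (T.x2_lt_of_leftAdj hjk).ne (e ▸ hlast.1)
  refine ⟨N, hN, first, last, hfirst.1, hlast.1, (hN _).2 hfirst.2, (hN _).2 hlast.2,
    fun j hj hne => ?_, fun k hk hne => ?_⟩
  · have hjR : (T.R j).x2 < T.F.x2 :=
      (T.le_F_x2 j).lt_of_ne fun e => hne (hlast' j ⟨e, (hN j).1 hj⟩)
    obtain ⟨k, hk, hk'⟩ := h.existsUnique_right hgen hnest hjR ((hN j).1 hj)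
    exact ⟨k, ⟨(hN k).2 hk.2, hne_first j k hk.1, hk.1⟩,
      fun k' h' => hk' k' ⟨h'.2.2, (hN k').1 h'.1⟩⟩
  · have hkL : T.F.x1 < (T.R k).x1 :=
      (T.F_x1_le k).lt_of_ne fun e => hne (hfirst' k ⟨e.symm, (hN k).1 hk⟩)
    obtain ⟨j, hj, hj'⟩ := h.existsUnique_left hgen hnest hkL ((hN k).1 hk)
    exact ⟨j, ⟨(hN j).2 hj.2, hne_last j k hj.1, hj.1⟩,
      fun j' h' => hj' j' ⟨h'.2.2, (hN j').1 h'.1⟩⟩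

lemma existsUnique_mem (hgen : Generic T) (hnest : NestedContacts T) (hx : T.IsLayout l r L R)
    (hy : T.swap.IsLayout b t B H) {x : ℝ} (hxLR : x ∈ Ico L R) (hyBH : y ∈ Ico B H) :
    ∃! k, y ∈ Ico (b k) (t k) ∧ x ∈ Ico (l k) (r k) := by
  obtain ⟨N, hN, first, last, hL, hR, hchain⟩ := hy.exists_isFinChain_row hgen hnest hyBH
  rw [← hx.left first hL, ← hx.right last hR] at hxLR
  simpa only [hN] using
    hchain.existsUnique_mem_Ico (fun k _ => hx.le k) (fun j _ k _ => hx.adj j k) hxLR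

end IsLayout

lemma nonempty (T : Tiling I) : Nonempty I :=
  let ⟨i, _⟩ := T.exists_mem_Ico_Ico (left_mem_Ico.2 T.F.hx) (left_mem_Ico.2 T.F.hy)
  ⟨i⟩

section OfLayouts

variable {T : Tiling I} {l r b t : I → ℝ} {L R B H : ℝ}

lemma IsLayout.frame_lt (h : T.IsLayout l r L R) (hlt : ∀ i, l i < r i) : L < R :=
  let ⟨i⟩ := T.nonempty
  (h.le_left i).trans_lt ((hlt i).trans_le (h.right_le i))

lemma IsLayout.eq_of_overlap (hgen : Generic T) (hnest : NestedContacts T)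
    (hx : T.IsLayout l r L R) (hlr : ∀ i, l i < r i) (hy : T.swap.IsLayout b t B H)
    (hbt : ∀ i, b i < t i) {i j : I} (hij : l i < r j) (hji : l j < r i) (hij' : b i < t j)
    (hji' : b j < t i) : i = j := by
  have hmem : max (l i) (l j) ∈ Ico L R ∧ max (b i) (b j) ∈ Ico B H :=
    ⟨⟨(hx.le_left i).trans (le_max_left _ _), (max_lt (hlr i) hji).trans_le (hx.right_le i)⟩,
      (hy.le_left i).trans (le_max_left _ _), (max_lt (hbt i) hji').trans_le (hy.right_le i)⟩
  exact (hx.existsUnique_mem hgen hnest hy hmem.1 hmem.2).unique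
    ⟨⟨le_max_left _ _, max_lt (hbt i) hji'⟩, le_max_left _ _, max_lt (hlr i) hji⟩
    ⟨⟨le_max_right _ _, max_lt hij' (hbt j)⟩, le_max_right _ _, max_lt hij (hlr j)⟩

/-- The tiling whose rectangles are the products of a horizontal and a vertical layout of `T` with
positive widths and heights. -/
def ofLayouts (hgen : Generic T) (hnest : NestedContacts T) (hx : T.IsLayout l r L R)
    (hlr : ∀ i, l i < r i) (hy : T.swap.IsLayout b t B H) (hbt : ∀ i, b i < t i) : Tiling I where
  R i := ⟨l i, r i, b i, t i, hlr i, hbt i⟩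
  F := ⟨L, R, B, H, hx.frame_lt hlr, hy.frame_lt hbt⟩
  disj i j hij := Rect.interior_inter_interior_eq_empty_iff.2 fun ⟨h1, h2, h3, h4⟩ =>
    hij (hx.eq_of_overlap hgen hnest hlr hy hbt h1 h2 h3 h4)
  union := by
    refine (iUnion_subset fun i => prod_mono (Icc_subset_Icc (hx.le_left i) (hx.right_le i))
      (Icc_subset_Icc (hy.le_left i) (hy.right_le i))).antisymm ?_
    have hcover : Ico L R ×ˢ Ico B H ⊆ ⋃ i, Icc (l i) (r i) ×ˢ Icc (b i) (t i) := fun p hp => by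
      obtain ⟨i, hi, -⟩ := hx.existsUnique_mem hgen hnest hy hp.1 hp.2
      exact mem_iUnion.2 ⟨i, Ico_subset_Icc_self hi.2, Ico_subset_Icc_self hi.1⟩
    have hclosed : IsClosed (⋃ i, Icc (l i) (r i) ×ˢ Icc (b i) (t i)) :=
      isClosed_iUnion_of_finite fun i => isClosed_Icc.prod isClosed_Icc
    have := closure_minimal hcover hclosed
    rwa [closure_prod_eq, closure_Ico (hx.frame_lt hlr).ne, closure_Ico (hy.frame_lt hbt).ne]
      at this

end OfLayouts

section WeakEquiv

variable {T T' : Tiling I}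

lemma x1_eq_F_x1_iff_of_isLayout
    (h : T.IsLayout (fun i => (T'.R i).x1) (fun i => (T'.R i).x2) T'.F.x1 T'.F.x2) (i : I) :
    (T.R i).x1 = T.F.x1 ↔ (T'.R i).x1 = T'.F.x1 := by
  refine ⟨h.left i, fun hi => ?_⟩
  by_contra hne
  obtain ⟨k, hki⟩ := T.exists_leftAdj ((T.F_x1_le i).lt_of_ne (Ne.symm hne))
  exact (hi.symm.trans (h.adj k i hki).symm).not_lt ((T'.F_x1_le k).trans_lt (T'.R k).hx)

lemma x2_eq_F_x2_iff_of_isLayout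
    (h : T.IsLayout (fun i => (T'.R i).x1) (fun i => (T'.R i).x2) T'.F.x1 T'.F.x2) (i : I) :
    (T.R i).x2 = T.F.x2 ↔ (T'.R i).x2 = T'.F.x2 := by
  simpa only [Tiling.reflect, Rect.reflect, neg_inj] using
    T.reflect.x1_eq_F_x1_iff_of_isLayout (T' := T'.reflect) h.reflect i

lemma leftAdj_iff_of_isLayout (hgen : Generic T) (hnest : NestedContacts T)
    (hx : T.IsLayout (fun i => (T'.R i).x1) (fun i => (T'.R i).x2) T'.F.x1 T'.F.x2)
    (hy : T.swap.IsLayout (fun i => (T'.R i).y1) (fun i => (T'.R i).y2) T'.F.y1 T'.F.y2)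
    (i j : I) : LeftAdj (T.R i) (T.R j) ↔ LeftAdj (T'.R i) (T'.R j) := by
  have hyi := (T'.R i).hy
  have hyj := (T'.R j).hy
  refine ⟨fun hij => ?_, fun hij => ?_⟩
  · refine leftAdj_iff.2 ⟨hx.adj i j hij, ?_⟩
    rcases hy.Ico_nested hgen hnest hij with hsub | hsub
    · have := (Ico_subset_Ico_iff hyj).1 hsub
      constructor <;> linarith
    · have := (Ico_subset_Ico_iff hyi).1 hsub
      constructor <;> linarith
  · obtain ⟨hx', hy1, hy2⟩ := leftAdj_iff.1 hij
    have hi : (T.R i).x2 < T.F.x2 := (T.le_F_x2 i).lt_of_ne fun e =>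
      (T'.x2_lt_of_leftAdj hij).ne (hx.right i e)
    obtain ⟨k, ⟨hik, hk⟩, -⟩ := hy.existsUnique_right hgen hnest hi
      (y := max (T'.R i).y1 (T'.R j).y1) ⟨le_max_left _ _, max_lt hyi hy2⟩
    have hk1 := hk.1.trans_lt (max_lt hy1 hyj)
    have hk2 := (le_max_right _ _).trans_lt hk.2
    have hjk : (T'.R j).x1 = (T'.R k).x1 := hx'.symm.trans (hx.adj i k hik)
    rwa [T'.eq_of_x1_eq_x1 hjk hk2 hk1]

lemma weakEquiv_of_isLayout (hgen : Generic T) (hnest : NestedContacts T)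
    (hnest' : NestedContacts T.swap)
    (hx : T.IsLayout (fun i => (T'.R i).x1) (fun i => (T'.R i).x2) T'.F.x1 T'.F.x2)
    (hy : T.swap.IsLayout (fun i => (T'.R i).y1) (fun i => (T'.R i).y2) T'.F.y1 T'.F.y2) :
    WeakEquiv T T' := by
  refine ⟨leftAdj_iff_of_isLayout hgen hnest hx hy, fun i j => ?_, fun i => ?_, fun i => ?_,
    fun i => ?_, fun i => ?_⟩
  · simp only [belowAdj_iff_leftAdj_swap]
    exact T.swap.leftAdj_iff_of_isLayout (T' := T'.swap) hgen.swap hnest' hy hx i j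
  · simp only [meetsLeftSide_R_iff, x1_eq_F_x1_iff_of_isLayout hx]
  · simp only [meetsRightSide_R_iff, x2_eq_F_x2_iff_of_isLayout hx]
  · simp only [meetsTopSide_iff_meetsRightSide_swap]
    exact T.swap.meetsRightSide_R_iff.trans <|
      (T.swap.x2_eq_F_x2_iff_of_isLayout (T' := T'.swap) hy i).trans
        T'.swap.meetsRightSide_R_iff.symm
  · simp only [meetsBottomSide_iff_meetsLeftSide_swap]
    exact T.swap.meetsLeftSide_R_iff.trans <|
      (T.swap.x1_eq_F_x1_iff_of_isLayout (T' := T'.swap) hy i).trans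
        T'.swap.meetsLeftSide_R_iff.symm

end WeakEquiv

end Tiling

/-! ### Flows and the existence of prescribed areas -/

/-- The derivative of the logarithm of the product vanishes at the maximum. -/
lemma sum_div_mul_eq_zero_of_isLocalMax_prod_rpow {ι : Type*} [Fintype ι] {a v w : ι → ℝ}
    (ha : ∀ i, 0 < a i) (h : IsLocalMax (fun s : ℝ => ∏ i, (a i + s * v i) ^ w i) 0) :
    ∑ i, w i / a i * v i = 0 := by
  have hderiv : ∀ i, HasDerivAt (fun s : ℝ => (a i + s * v i) ^ w i)
      (v i * w i * a i ^ (w i - 1)) 0 := fun i => by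
    have hlin := ((hasDerivAt_id (0 : ℝ)).mul_const (v i)).const_add (a i)
    simpa using hlin.rpow_const (p := w i) (Or.inl (by simpa using (ha i).ne'))
  have hlog : logDeriv (fun s : ℝ => ∏ i, (a i + s * v i) ^ w i) 0 = 0 := by
    rw [logDeriv_apply, h.deriv_eq_zero, zero_div]
  rw [logDeriv_prod (fun i _ => by simpa using (Real.rpow_pos_of_pos (ha i) _).ne')
    fun i _ => (hderiv i).differentiableAt] at hlog
  rw [← hlog]
  refine Finset.sum_congr rfl fun i _ => ?_
  rw [logDeriv_apply, (hderiv i).deriv, zero_mul, add_zero, Real.rpow_sub_one (ha i).ne']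
  have := (Real.rpow_pos_of_pos (ha i) (w i)).ne'
  field_simp

namespace Tiling

variable {T : Tiling I} {l r f w : I → ℝ} {L R a c x y : ℝ} {i : I}

/-- The amounts `f i` crossing the rectangles from left to right form a flow: they are balanced
along every vertical segment inside the frame. The balance is stated in weak form, against
variations `u`, `v` of the left and right sides that move touching sides together and fix the
frame. -/
def IsFlow (T : Tiling I) (f : I → ℝ) : Prop :=
  ∀ u v : I → ℝ, (∀ i j, LeftAdj (T.R i) (T.R j) → v i = u j) →
    (∀ i, (T.R i).x1 = T.F.x1 → u i = 0) → (∀ i, (T.R i).x2 = T.F.x2 → v i = 0) →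
    ∑ i, f i * (v i - u i) = 0

variable (T) in
lemma isLayout_self :
    T.IsLayout (fun i => (T.R i).x1) (fun i => (T.R i).x2) T.F.x1 T.F.x2 where
  le i := (T.R i).hx.le
  adj _ _ h := h.1
  left _ h := h
  right _ h := h

variable (T L R) in
lemma isCompact_setOf_isLayout :
    IsCompact {p : (I → ℝ) × (I → ℝ) | T.IsLayout p.1 p.2 L R} := by
  refine (isCompact_Icc (a := (fun _ => L, fun _ => L)) (b := (fun _ => R, fun _ => R))
    ).of_isClosed_subset ?_ fun p hp => ⟨⟨hp.le_left, fun i => (hp.le_left i).trans (hp.le i)⟩,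
      fun i => (hp.le i).trans (hp.right_le i), hp.right_le⟩
  have hiff : ∀ p : (I → ℝ) × (I → ℝ), T.IsLayout p.1 p.2 L R ↔ (∀ i, p.1 i ≤ p.2 i) ∧
      (∀ i j, LeftAdj (T.R i) (T.R j) → p.2 i = p.1 j) ∧ (∀ i, (T.R i).x1 = T.F.x1 → p.1 i = L) ∧
      ∀ i, (T.R i).x2 = T.F.x2 → p.2 i = R :=
    fun p => ⟨fun h => ⟨h.le, h.adj, h.left, h.right⟩, fun ⟨h1, h2, h3, h4⟩ => ⟨h1, h2, h3, h4⟩⟩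
  simp only [hiff, ofPred_and, ofPred_forall]
  refine .inter ?_ (.inter ?_ (.inter ?_ ?_))
  · exact isClosed_iInter fun i => isClosed_le (by fun_prop) (by fun_prop)
  · exact isClosed_iInter fun i => isClosed_iInter fun j => isClosed_iInter fun _ =>
      isClosed_eq (by fun_prop) (by fun_prop)
  · exact isClosed_iInter fun i => isClosed_iInter fun _ => isClosed_eq (by fun_prop) (by fun_prop)
  · exact isClosed_iInter fun i => isClosed_iInter fun _ => isClosed_eq (by fun_prop) (by fun_prop)

lemma exists_isLayout_isMaxOn_prod_rpow (T : Tiling I) (hw : ∀ i, 0 < w i) :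
    ∃ l r : I → ℝ, T.IsLayout l r T.F.x1 T.F.x2 ∧ (∀ i, l i < r i) ∧
      ∀ l' r', T.IsLayout l' r' T.F.x1 T.F.x2 →
        ∏ i, (r' i - l' i) ^ w i ≤ ∏ i, (r i - l i) ^ w i := by
  have hcont : Continuous fun p : (I → ℝ) × (I → ℝ) => ∏ i, (p.2 i - p.1 i) ^ w i :=
    continuous_finsetProd _ fun i _ =>
      (Real.continuous_rpow_const (hw i).le).comp (by fun_prop)
  obtain ⟨⟨l, r⟩, hlr, hmax⟩ := (isCompact_setOf_isLayout T T.F.x1 T.F.x2).exists_isMaxOn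
    ⟨(_, _), T.isLayout_self⟩ hcont.continuousOn
  have hle : ∀ l' r', T.IsLayout l' r' T.F.x1 T.F.x2 →
      ∏ i, (r' i - l' i) ^ w i ≤ ∏ i, (r i - l i) ^ w i :=
    fun l' r' h => hmax (show (l', r') ∈ _ from h)
  refine ⟨l, r, hlr, fun i => (hlr.le i).lt_of_ne fun (hi : l i = r i) => ?_, hle⟩
  have hpos : 0 < ∏ i, (r i - l i) ^ w i := lt_of_lt_of_le
    (Finset.prod_pos fun i _ => Real.rpow_pos_of_pos (sub_pos.2 (T.R i).hx) _)
    (hle _ _ T.isLayout_self)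
  refine hpos.ne' (Finset.prod_eq_zero (Finset.mem_univ i) ?_)
  rw [hi, sub_self, Real.zero_rpow (hw i).ne']

lemma exists_isLayout_isFlow (T : Tiling I) (hw : ∀ i, 0 < w i) :
    ∃ l r : I → ℝ, T.IsLayout l r T.F.x1 T.F.x2 ∧ (∀ i, l i < r i) ∧
      T.IsFlow fun i => w i / (r i - l i) := by
  obtain ⟨l, r, hlayout, hlr, hmax⟩ := T.exists_isLayout_isMaxOn_prod_rpow hw
  refine ⟨l, r, hlayout, hlr, fun u v hadj hu hv =>
    sum_div_mul_eq_zero_of_isLocalMax_prod_rpow (fun i => sub_pos.2 (hlr i)) ?_⟩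
  have hpos : ∀ᶠ s in nhds (0 : ℝ), ∀ i, 0 < r i - l i + s * (v i - u i) :=
    Filter.eventually_all.2 fun i => Filter.Tendsto.eventually_const_lt (v := r i - l i)
      (sub_pos.2 (hlr i)) (Continuous.tendsto' (by fun_prop) _ _ (by simp))
  filter_upwards [hpos] with s hs
  have hmoved : T.IsLayout (fun i => l i + s * u i) (fun i => r i + s * v i) T.F.x1 T.F.x2 :=
    { le := fun i => by linarith [hs i]
      adj := fun i j hij => by rw [hlayout.adj i j hij, hadj i j hij]
      left := fun i hi => by rw [hlayout.left i hi, hu i hi, mul_zero, add_zero]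
      right := fun i hi => by rw [hlayout.right i hi, hv i hi, mul_zero, add_zero] }
  have hwidth : ∀ s i, r i - l i + s * (v i - u i) = r i + s * v i - (l i + s * u i) :=
    fun s i => by ring
  simpa only [hwidth, zero_mul, add_zero] using hmax _ _ hmoved

open Classical in
/-- The amount of `f` that crosses the vertical line at abscissa `x` below height `y`. For a flow
`f`, these amounts at the corners of the rectangles serve as vertical coordinates. -/
noncomputable def flowBelow (T : Tiling I) (f : I → ℝ) (x y : ℝ) : ℝ :=
  ∑ i, if x ∈ Ico (T.R i).x1 (T.R i).x2 ∧ (T.R i).y2 ≤ y then f i else 0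

/-- Test the flow against the variation that moves the sides with abscissa in `(a, c]` lying below
height `y`. -/
lemma IsFlow.flowBelow_eq (hf : T.IsFlow f) (ha : T.F.x1 ≤ a) (hac : a ≤ c) (hc : c < T.F.x2)
    (h : ∀ i j, LeftAdj (T.R i) (T.R j) → (T.R i).x2 ∈ Ioc a c →
      ((T.R i).y2 ≤ y ↔ (T.R j).y2 ≤ y)) :
    T.flowBelow f a y = T.flowBelow f c y := by
  classical
  have hbal := hf (fun i => if (T.R i).x1 ∈ Ioc a c ∧ (T.R i).y2 ≤ y then 1 else 0)
    (fun i => if (T.R i).x2 ∈ Ioc a c ∧ (T.R i).y2 ≤ y then 1 else 0)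
    (fun i j hij => if_congr (hij.1 ▸ and_congr_right (h i j hij)) rfl rfl)
    (fun i hi => if_neg fun hin => (hi ▸ hin.1.1).not_ge ha)
    (fun i hi => if_neg fun hin => (hi ▸ hin.1.2).not_gt hc)
  rw [← sub_eq_zero, ← hbal, flowBelow, flowBelow, ← Finset.sum_sub_distrib]
  refine Finset.sum_congr rfl fun i _ => ?_
  have := (T.R i).hx
  simp only [mem_Ico, mem_Ioc]
  split_ifs <;> grind

lemma flowBelow_y2_sub_flowBelow_y1 (hx : x ∈ Ico (T.R i).x1 (T.R i).x2) :
    T.flowBelow f x (T.R i).y2 - T.flowBelow f x (T.R i).y1 = f i := by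
  classical
  have hi := (T.R i).hy
  rw [flowBelow, flowBelow, ← Finset.sum_sub_distrib, Finset.sum_eq_single_of_mem i (by simp)]
  · rw [if_pos ⟨hx, le_rfl⟩, if_neg fun h => hi.not_ge h.2, sub_zero]
  · intro j _ hji
    have hj := (T.R j).hy
    have := T.eq_of_overlap (i := j) (j := i)
    simp only [mem_Ico] at hx ⊢
    split_ifs <;> grind

/-- No rectangle crosses the top side of `i`. -/
lemma IsFlow.flowBelow_y2_eq (hf : T.IsFlow f) (hx : x ∈ Ico (T.R i).x1 (T.R i).x2) :
    T.flowBelow f (T.R i).x1 (T.R i).y2 = T.flowBelow f x (T.R i).y2 := by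
  have hiy := (T.R i).hy
  refine hf.flowBelow_eq (T.F_x1_le i) hx.1 (hx.2.trans_le (T.le_F_x2 i)) fun j k hjk hj => ?_
  obtain ⟨hjk, hjk1, hjk2⟩ := leftAdj_iff.1 hjk
  have hjx := (T.R j).hx
  have hkx := (T.R k).hx
  have hi := hx.2
  constructor <;> intro h <;> by_contra! hcon
  · have := T.eq_of_overlap (i := k) (j := i) (by linarith [hj.2]) (by linarith [hj.1])
      (by linarith) (by linarith)
    exact hcon.ne' (this ▸ rfl)
  · have := T.eq_of_overlap (i := j) (j := i) (by linarith [hj.2]) (by linarith [hj.1])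
      (by linarith) (by linarith)
    exact hcon.ne' (this ▸ rfl)

lemma IsFlow.flowBelow_y1_eq (hf : T.IsFlow f) (hx : x ∈ Ico (T.R i).x1 (T.R i).x2) :
    T.flowBelow f (T.R i).x1 (T.R i).y1 = T.flowBelow f x (T.R i).y1 := by
  have h1 := T.flowBelow_y2_sub_flowBelow_y1 (f := f) (left_mem_Ico.2 (T.R i).hx)
  have h2 := T.flowBelow_y2_sub_flowBelow_y1 (f := f) hx
  linarith [hf.flowBelow_y2_eq hx]

lemma IsFlow.isLayout_flowBelow (hf : T.IsFlow f) (hf0 : ∀ i, 0 ≤ f i) :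
    T.swap.IsLayout (fun i => T.flowBelow f (T.R i).x1 (T.R i).y1)
      (fun i => T.flowBelow f (T.R i).x1 (T.R i).y2) 0 (T.flowBelow f T.F.x1 T.F.y2) where
  le i := by
    linarith [hf0 i, T.flowBelow_y2_sub_flowBelow_y1 (f := f) (left_mem_Ico.2 (T.R i).hx)]
  adj i j hij := by
    obtain ⟨hy : (T.R i).y2 = (T.R j).y1, hx : (T.R i).x1 < (T.R j).x2,
      hx' : (T.R j).x1 < (T.R i).x2⟩ := leftAdj_iff.1 hij
    have hi : max (T.R i).x1 (T.R j).x1 ∈ Ico (T.R i).x1 (T.R i).x2 :=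
      ⟨le_max_left _ _, max_lt (T.R i).hx hx'⟩
    have hj : max (T.R i).x1 (T.R j).x1 ∈ Ico (T.R j).x1 (T.R j).x2 :=
      ⟨le_max_right _ _, max_lt hx (T.R j).hx⟩
    rw [hf.flowBelow_y2_eq hi, hf.flowBelow_y1_eq hj, hy]
  left i hi := Finset.sum_eq_zero fun j _ => if_neg fun hj =>
    ((T.F_y1_le j).trans_lt (T.R j).hy).not_ge (hj.2.trans_eq hi)
  right i hi := by
    rw [show (T.R i).y2 = T.F.y2 from hi]
    exact (hf.flowBelow_eq le_rfl (T.F_x1_le i) ((T.R i).hx.trans_le (T.le_F_x2 i)) fun j k _ _ =>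
      iff_of_true (T.le_F_y2 j) (T.le_F_y2 k)).symm

theorem areaUniversal_of_nestedContacts (hgen : Generic T) (hnest : NestedContacts T)
    (hnest' : NestedContacts T.swap) : AreaUniversal T := by
  intro w hw
  obtain ⟨l, r, hx, hlr, hf⟩ := T.exists_isLayout_isFlow hw
  have hf0 : ∀ i, 0 < w i / (r i - l i) := fun i => div_pos (hw i) (sub_pos.2 (hlr i))
  have hheight := fun i => T.flowBelow_y2_sub_flowBelow_y1 (f := fun i => w i / (r i - l i))
    (left_mem_Ico.2 (T.R i).hx)
  have hy := hf.isLayout_flowBelow fun i => (hf0 i).le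
  refine ⟨ofLayouts hgen hnest hx hlr hy fun i => by linarith [hf0 i, hheight i],
    weakEquiv_of_isLayout hgen hnest hnest' hx hy, fun i => ?_⟩
  have hwidth := (sub_pos.2 (hlr i)).ne'
  calc (r i - l i) * _ = (r i - l i) * (w i / (r i - l i)) := congrArg _ (hheight i)
    _ = w i := mul_div_cancel₀ _ hwidth

end Tiling

/-! ### Internal segments -/

lemma exists_maximal_Icc_subset {α : Type*} [ConditionallyCompleteLinearOrder α] [DenselyOrdered α]
    [TopologicalSpace α] [OrderTopology α] {A : Set α} {c d : α} (hA : IsCompact A) (h : c ≤ d)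
    (hcd : Icc c d ⊆ A) : ∃ c' d', c' ≤ c ∧ d ≤ d' ∧ Icc c' d' ⊆ A ∧
      ∀ ⦃c'' d''⦄, c'' ≤ c' → d' ≤ d'' → Icc c'' d'' ⊆ A → c'' = c' ∧ d'' = d' := by
  set C := connectedComponentIn A c
  have hcC : c ∈ C := mem_connectedComponentIn (hcd (left_mem_Icc.2 h))
  have hCA : C ⊆ A := connectedComponentIn_subset A c
  have hIcc {a b : α} (ha : a ≤ c) (hb : c ≤ b) (hab : Icc a b ⊆ A) : Icc a b ⊆ C :=
    isPreconnected_Icc.subset_connectedComponentIn ⟨ha, hb⟩ hab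
  have hclosure : closure C ⊆ C :=
    isPreconnected_connectedComponentIn.closure.subset_connectedComponentIn (subset_closure hcC)
      (closure_minimal hCA hA.isClosed)
  have hC : C = Icc (sInf C) (sSup C) :=
    eq_Icc_of_connected_compact ⟨⟨c, hcC⟩, isPreconnected_connectedComponentIn⟩
      (hA.of_isClosed_subset (isClosed_of_closure_subset hclosure) hCA)
  obtain ⟨hc, hd⟩ := (Icc_subset_Icc_iff h).1 ((hIcc le_rfl h hcd).trans hC.subset)
  refine ⟨_, _, hc, hd, hC.symm.subset.trans hCA, fun c'' d'' hc'' hd'' hsub => ?_⟩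
  have hle : c ≤ d'' := h.trans (hd.trans hd'')
  obtain ⟨hc', hd'⟩ := (Icc_subset_Icc_iff ((hc''.trans hc).trans hle)).1
    ((hIcc (hc''.trans hc) hle hsub).trans hC.subset)
  exact ⟨hc''.antisymm hc', hd'.antisymm hd''⟩

lemma vseg_ne_hseg {x c d a b y : ℝ} (h : c < d) : vseg x c d ≠ hseg a b y := fun e =>
  have hc : (x, c) ∈ hseg a b y := e ▸ ⟨rfl, left_mem_Icc.2 h.le⟩
  have hd : (x, d) ∈ hseg a b y := e ▸ ⟨rfl, right_mem_Icc.2 h.le⟩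
  h.ne (Eq.trans hc.2 (Eq.symm hd.2))

lemma Rect.isSide_vseg_iff {A : Rect} {x c d : ℝ} (h : c < d) :
    A.IsSide (vseg x c d) ↔ (A.x1 = x ∨ A.x2 = x) ∧ A.y1 = c ∧ A.y2 = d := by
  rw [Rect.IsSide, vseg_eq_vseg_iff h, vseg_eq_vseg_iff h, or_iff_left (vseg_ne_hseg h),
    or_iff_left (vseg_ne_hseg h)]
  grind

lemma Rect.IsSide.swap {A : Rect} {S : Set (ℝ × ℝ)} (h : A.IsSide S) :
    A.swap.IsSide (Prod.swap ⁻¹' S) := by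
  rcases h with rfl | rfl | rfl | rfl <;>
    simp [Rect.IsSide, Rect.swap, preimage_swap_vseg, preimage_swap_hseg]

lemma Rect.frontier_toSet_swap (A : Rect) :
    frontier A.swap.toSet = Prod.swap ⁻¹' frontier A.toSet := by
  rw [Rect.toSet_swap]
  exact ((Homeomorph.prodComm ℝ ℝ).preimage_frontier A.toSet).symm

lemma Rect.mem_frontier_toSet_of_side {A : Rect} {x y : ℝ} (hx : A.x1 = x ∨ A.x2 = x)
    (hy : y ∈ Icc A.y1 A.y2) : (x, y) ∈ frontier A.toSet := by
  have hA := A.hx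
  rw [A.isClosed_toSet.frontier_eq, mem_sdiff, Rect.mem_toSet, Rect.mem_interior_toSet]
  grind

lemma Rect.interior_toSet_swap (A : Rect) :
    interior A.swap.toSet = Prod.swap ⁻¹' interior A.toSet := by
  rw [Rect.toSet_swap]
  exact ((Homeomorph.prodComm ℝ ℝ).preimage_interior A.toSet).symm

lemma IsInternalSeg.swap {T : Tiling I} {S : Set (ℝ × ℝ)} (h : IsInternalSeg T S) :
    IsInternalSeg T.swap (Prod.swap ⁻¹' S) := by
  have hfrontier : ⋃ i, frontier (T.swap.R i).toSet = Prod.swap ⁻¹' ⋃ i, frontier (T.R i).toSet :=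
    (iUnion_congr fun i => (T.R i).frontier_toSet_swap).trans preimage_iUnion.symm
  have hinterior : interior T.swap.F.toSet = Prod.swap ⁻¹' interior T.F.toSet :=
    T.F.interior_toSet_swap
  rw [IsInternalSeg, hfrontier, hinterior]
  rcases h with ⟨x, c, d, hcd, rfl, hS, hopen⟩ | ⟨a, b, y, hab, rfl, hS, hopen⟩
  · refine .inr ⟨c, d, x, hcd, preimage_swap_vseg x c d, preimage_mono hS, ?_⟩
    exact (preimage_swap_prod {x} (Ioo c d)).symm.subset.trans (preimage_mono hopen)
  · refine .inl ⟨y, a, b, hab, preimage_swap_hseg a b y, preimage_mono hS, ?_⟩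
    exact (preimage_swap_prod (Ioo a b) {y}).symm.subset.trans (preimage_mono hopen)

lemma IsMaxInternalSeg.swap {T : Tiling I} {S : Set (ℝ × ℝ)} (h : IsMaxInternalSeg T S) :
    IsMaxInternalSeg T.swap (Prod.swap ⁻¹' S) :=
  ⟨h.1.swap, fun _ hS' hsub => preimage_swap_inj.1
    (h.2 _ hS'.swap fun p hp => hsub (a := p.swap) hp)⟩

/-- Every maximal internal segment is a side of one of the rectangles. -/
def OneSided (T : Tiling I) : Prop :=
  ∀ S : Set (ℝ × ℝ), IsMaxInternalSeg T S → ∃ i, (T.R i).IsSide S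

lemma OneSided.swap {T : Tiling I} (h : OneSided T) : OneSided T.swap := fun _ hS =>
  (h _ hS.swap).imp fun _ hi => hi.swap

namespace Tiling

variable {T : Tiling I} {x y c d : ℝ} {i j : I}

lemma isInternalSeg_vseg_iff (h : c < d) :
    IsInternalSeg T (vseg x c d) ↔ x ∈ Ioo T.F.x1 T.F.x2 ∧ (T.F.y1 ≤ c ∧ d ≤ T.F.y2) ∧
      ∀ y ∈ Icc c d, ∃ i, (x, y) ∈ frontier (T.R i).toSet := by
  have hfrontier : vseg x c d ⊆ (⋃ i, frontier (T.R i).toSet) ↔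
      ∀ y ∈ Icc c d, ∃ i, (x, y) ∈ frontier (T.R i).toSet := by
    simp only [vseg, singleton_prod, subset_def, forall_mem_image, mem_iUnion]
  have hopen : vsegOpen x c d ⊆ interior T.F.toSet ↔
      x ∈ Ioo T.F.x1 T.F.x2 ∧ T.F.y1 ≤ c ∧ d ≤ T.F.y2 := by
    rw [vsegOpen, Rect.toSet, interior_prod_eq, interior_Icc, interior_Icc,
      prod_subset_prod_iff' ((singleton_nonempty x).prod (nonempty_Ioo.2 h)),
      singleton_subset_iff, Ioo_subset_Ioo_iff h]
  rw [← and_assoc, ← hopen, ← hfrontier]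
  constructor
  · rintro (⟨x', c', d', -, e, hS, hS'⟩ | ⟨a, b, y, -, e, -⟩)
    · obtain ⟨rfl, rfl, rfl⟩ := (vseg_eq_vseg_iff h).1 e
      exact ⟨hS', hS⟩
    · exact absurd e (vseg_ne_hseg h)
  · exact fun ⟨hS', hS⟩ => .inl ⟨x, c, d, h, rfl, hS, hS'⟩

lemma eq_vseg_of_vseg_subset {S : Set (ℝ × ℝ)} (h : c < d) (hS : IsInternalSeg T S)
    (hsub : vseg x c d ⊆ S) : ∃ c' d', c' < d' ∧ c' ≤ c ∧ d ≤ d' ∧ S = vseg x c' d' := by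
  rcases hS with ⟨x', c', d', hcd', rfl, -⟩ | ⟨a, b, y, -, rfl, -⟩
  · obtain ⟨rfl, hc, hd⟩ := (vseg_subset_vseg_iff h).1 hsub
    exact ⟨c', d', hcd', hc, hd, rfl⟩
  · have hc := (hsub ⟨rfl, left_mem_Icc.2 h.le⟩ : (x, c) ∈ hseg a b y)
    have hd := (hsub ⟨rfl, right_mem_Icc.2 h.le⟩ : (x, d) ∈ hseg a b y)
    exact absurd (Eq.trans hc.2 (Eq.symm hd.2)) h.ne

lemma exists_isMaxInternalSeg_vseg (h : c < d) (hS : IsInternalSeg T (vseg x c d)) :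
    ∃ c' d', c' ≤ c ∧ d ≤ d' ∧ IsMaxInternalSeg T (vseg x c' d') := by
  have hx := ((isInternalSeg_vseg_iff h).1 hS).1
  set A := Icc T.F.y1 T.F.y2 ∩ ⋃ i, (fun y => (x, y)) ⁻¹' frontier (T.R i).toSet
  have hA : IsCompact A := isCompact_Icc.inter_right <|
    isClosed_iUnion_of_finite fun i => isClosed_frontier.preimage (by fun_prop)
  have hseg {c' d' : ℝ} (h' : c' < d') : IsInternalSeg T (vseg x c' d') ↔ Icc c' d' ⊆ A := by
    rw [isInternalSeg_vseg_iff h', subset_inter_iff, Icc_subset_Icc_iff h'.le,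
      and_iff_right hx]
    simp only [subset_def, mem_iUnion, mem_preimage]
  obtain ⟨c', d', hc, hd, hsub, hmax⟩ := exists_maximal_Icc_subset hA h.le ((hseg h).1 hS)
  have h' : c' < d' := by linarith
  refine ⟨c', d', hc, hd, (hseg h').2 hsub, fun S' hS' hsub' => ?_⟩
  obtain ⟨c'', d'', h'', hc', hd', rfl⟩ := eq_vseg_of_vseg_subset h' hS' hsub'
  obtain ⟨rfl, rfl⟩ := hmax hc' hd' ((hseg h'').1 hS')
  rfl

lemma isInternalSeg_of_leftAdj (h : LeftAdj (T.R i) (T.R j)) :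
    IsInternalSeg T (vseg (T.R i).x2 (min (T.R i).y1 (T.R j).y1)
      (max (T.R i).y2 (T.R j).y2)) := by
  have hi := (T.R i).hy
  obtain ⟨hx, hlt, hlt'⟩ := leftAdj_iff.1 h
  refine (isInternalSeg_vseg_iff (by grind)).2
    ⟨⟨(T.F_x1_le i).trans_lt (T.R i).hx, T.x2_lt_of_leftAdj h⟩,
      ⟨le_min (T.F_y1_le i) (T.F_y1_le j), max_le (T.le_F_y2 i) (T.le_F_y2 j)⟩, fun y hy => ?_⟩
  have hmem : y ∈ Icc (T.R i).y1 (T.R i).y2 ∨ y ∈ Icc (T.R j).y1 (T.R j).y2 := by grind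
  rcases hmem with hy | hy
  · exact ⟨i, Rect.mem_frontier_toSet_of_side (.inr rfl) hy⟩
  · exact ⟨j, Rect.mem_frontier_toSet_of_side (.inl hx.symm) hy⟩

end Tiling

lemma OneSided.nestedContacts {T : Tiling I} (h : OneSided T) : T.NestedContacts := by
  intro i j hij
  obtain ⟨hx, hlt, hlt'⟩ := leftAdj_iff.1 hij
  have hi := (T.R i).hy
  obtain ⟨c, d, hc, hd, hS⟩ := Tiling.exists_isMaxInternalSeg_vseg (by grind)
    (Tiling.isInternalSeg_of_leftAdj hij)
  obtain ⟨k, hk⟩ := h _ hS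
  obtain ⟨hkx, rfl, rfl⟩ := (Rect.isSide_vseg_iff (by grind)).1 hk
  have hxi := (T.R i).hx
  have hxj := (T.R j).hx
  have hxk := (T.R k).hx
  have hk : k = i ∨ k = j := hkx.symm.imp
    (fun hkx => T.eq_of_overlap (by grind) (by grind) (by grind) (by grind))
    (fun hkx => T.eq_of_overlap (by grind) (by grind) (by grind) (by grind))
  rcases hk with rfl | rfl
  · exact .inl (by grind)
  · exact .inr (by grind)

lemma OneSided.areaUniversal {T : Tiling I} (h : OneSided T) (hgen : Generic T) :
    AreaUniversal T :=
  T.areaUniversal_of_nestedContacts hgen h.nestedContacts h.swap.nestedContacts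

/-! ### Walls that are not sides -/

namespace Tiling

/-- The segment `{x} × [c, d]` separates the rectangles to its left from those to its right: no
rectangle crosses it, and no side on the line through it extends past one of its ends. -/
structure IsWall (T : Tiling I) (x c d : ℝ) : Prop where
  lt : c < d
  x_mem : x ∈ Ioo T.F.x1 T.F.x2
  F_y1_le : T.F.y1 ≤ c
  le_F_y2 : d ≤ T.F.y2
  not_cross i : (T.R i).x1 < x → x < (T.R i).x2 → (T.R i).y2 ≤ c ∨ d ≤ (T.R i).y1
  side_subset i : (T.R i).x1 = x ∨ (T.R i).x2 = x → (T.R i).y1 < d → c < (T.R i).y2 →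
    c ≤ (T.R i).y1 ∧ (T.R i).y2 ≤ d

/-- A pattern of contacts that forces `q` to lie to the upper right of `p` in every weakly
equivalent tiling: `p` lies below a rectangle `a`, and `q` above a rectangle `e`, where `p` and `a`
touch `e` from the left and `a` touches `q` from the left. -/
def IsStagger (T : Tiling I) (p q : I) : Prop :=
  ∃ a e, BelowAdj (T.R p) (T.R a) ∧ BelowAdj (T.R e) (T.R q) ∧
    LeftAdj (T.R p) (T.R e) ∧ LeftAdj (T.R a) (T.R e) ∧ LeftAdj (T.R a) (T.R q)

variable {T : Tiling I} {x y c d : ℝ} {i j l r p q : I}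

lemma notMem_interior_of_mem_frontier {z : ℝ × ℝ} (h : z ∈ frontier (T.R j).toSet) :
    z ∉ interior (T.R i).toSet := fun hi => by
  obtain ⟨hmem, hint⟩ := (T.R j).isClosed_toSet.frontier_eq.subset h
  obtain ⟨⟨hx1, hx2⟩, hy1, hy2⟩ := Rect.mem_interior_toSet.1 hi
  obtain ⟨⟨hxj1, hxj2⟩, hyj1, hyj2⟩ := Rect.mem_toSet.1 hmem
  obtain rfl : i = j := eq_of_overlap (hx1.trans_le hxj2) (hxj1.trans_lt hx2)
    (hy1.trans_le hyj2) (hyj1.trans_lt hy2)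
  exact hint hi

lemma isWall_of_isMaxInternalSeg (h : c < d) (hS : IsMaxInternalSeg T (vseg x c d)) :
    T.IsWall x c d := by
  obtain ⟨hx, hF, hfr⟩ := (isInternalSeg_vseg_iff h).1 hS.1
  refine ⟨h, hx, hF.1, hF.2, fun i hx1 hx2 => ?_, fun i hi hd hc => ?_⟩
  · by_contra! hy
    have hi := (T.R i).hy
    obtain ⟨y, hlt, hlt'⟩ := exists_between
      (show max c (T.R i).y1 < min d (T.R i).y2 by grind)
    obtain ⟨j, hj⟩ := hfr y (by grind)
    exact notMem_interior_of_mem_frontier hj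
      (Rect.mem_interior_toSet.2 ⟨⟨hx1, hx2⟩, by grind⟩)
  · have hlt : min c (T.R i).y1 < max d (T.R i).y2 := by grind
    have hseg : IsInternalSeg T (vseg x (min c (T.R i).y1) (max d (T.R i).y2)) := by
      refine (isInternalSeg_vseg_iff hlt).2
        ⟨hx, ⟨le_min hF.1 (T.F_y1_le i), max_le hF.2 (T.le_F_y2 i)⟩, fun y hy => ?_⟩
      have hmem : y ∈ Icc c d ∨ y ∈ Icc (T.R i).y1 (T.R i).y2 := by grind
      exact hmem.elim (hfr y) fun hy => ⟨i, Rect.mem_frontier_toSet_of_side hi hy⟩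
    have heq := (vseg_eq_vseg_iff hlt).1
      (hS.2 _ hseg ((vseg_subset_vseg_iff h).2 ⟨rfl, min_le_left .., le_max_left ..⟩))
    exact ⟨min_eq_left_iff.1 heq.2.1, max_eq_left_iff.1 heq.2.2⟩

namespace IsWall

lemma reflect (h : T.IsWall x c d) : T.reflect.IsWall (-x) c d where
  lt := h.lt
  x_mem := ⟨neg_lt_neg h.x_mem.2, neg_lt_neg h.x_mem.1⟩
  F_y1_le := h.F_y1_le
  le_F_y2 := h.le_F_y2
  not_cross i hx1 hx2 := h.not_cross i (neg_lt_neg_iff.1 hx2) (neg_lt_neg_iff.1 hx1)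
  side_subset i hi := h.side_subset i (hi.symm.imp neg_inj.1 neg_inj.1)

lemma exists_left_Ico (h : T.IsWall x c d) (hy : y ∈ Ico c d) :
    ∃ i, (T.R i).x2 = x ∧ y ∈ Ico (T.R i).y1 (T.R i).y2 ∧ c ≤ (T.R i).y1 ∧ (T.R i).y2 ≤ d := by
  obtain ⟨i, hx, hyi⟩ := T.exists_mem_Ioc_Ico ⟨h.x_mem.1, h.x_mem.2.le⟩
    (Ico_subset_Ico h.F_y1_le h.le_F_y2 hy)
  have hx2 : (T.R i).x2 = x :=
    hx.2.antisymm' (not_lt.1 fun hlt => by grind [h.not_cross i hx.1 hlt])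
  exact ⟨i, hx2, hyi, h.side_subset i (.inr hx2) (hyi.1.trans_lt hy.2) (hy.1.trans_lt hyi.2)⟩

lemma exists_left_Ioc (h : T.IsWall x c d) (hy : y ∈ Ioc c d) :
    ∃ i, (T.R i).x2 = x ∧ y ∈ Ioc (T.R i).y1 (T.R i).y2 ∧ c ≤ (T.R i).y1 ∧ (T.R i).y2 ≤ d := by
  obtain ⟨i, hx, hyi⟩ := T.exists_mem_Ioc_Ioc ⟨h.x_mem.1, h.x_mem.2.le⟩
    (Ioc_subset_Ioc h.F_y1_le h.le_F_y2 hy)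
  have hx2 : (T.R i).x2 = x :=
    hx.2.antisymm' (not_lt.1 fun hlt => by grind [h.not_cross i hx.1 hlt])
  exact ⟨i, hx2, hyi, h.side_subset i (.inr hx2) (hyi.1.trans_le hy.2) (hy.1.trans_le hyi.2)⟩

lemma exists_right_Ico (h : T.IsWall x c d) (hy : y ∈ Ico c d) :
    ∃ i, (T.R i).x1 = x ∧ y ∈ Ico (T.R i).y1 (T.R i).y2 ∧ c ≤ (T.R i).y1 ∧ (T.R i).y2 ≤ d :=
  let ⟨i, hx, hi⟩ := h.reflect.exists_left_Ico hy
  ⟨i, neg_inj.1 hx, hi⟩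

lemma exists_right_Ioc (h : T.IsWall x c d) (hy : y ∈ Ioc c d) :
    ∃ i, (T.R i).x1 = x ∧ y ∈ Ioc (T.R i).y1 (T.R i).y2 ∧ c ≤ (T.R i).y1 ∧ (T.R i).y2 ≤ d :=
  let ⟨i, hx, hi⟩ := h.reflect.exists_left_Ioc hy
  ⟨i, neg_inj.1 hx, hi⟩

/-- Otherwise four rectangles would meet at a point in the interior of the wall. -/
lemma y1_ne_y1 (h : T.IsWall x c d) (hgen : Generic T) (hl : (T.R l).x2 = x)
    (hr : (T.R r).x1 = x) (hc : c < (T.R l).y1) (hd : (T.R l).y1 < d) :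
    (T.R l).y1 ≠ (T.R r).y1 := fun hlr => by
  obtain ⟨i, hi, hyi, -⟩ := h.exists_left_Ioc ⟨hc, hd.le⟩
  obtain ⟨j, hj, hyj, -⟩ := h.exists_right_Ioc ⟨hc, hd.le⟩
  have hlx := (T.R l).hx
  have hrx := (T.R r).hx
  have hix := (T.R i).hx
  have hjx := (T.R j).hx
  have hly := (T.R l).hy
  have hry := (T.R r).hy
  have hjr : j = r := hgen.eq_of_mem (p := (x, (T.R l).y1)) (i := i) (j := l)
    (Rect.mem_toSet.2 (by grind)) (Rect.mem_toSet.2 (by grind)) (Rect.mem_toSet.2 (by grind))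
    (Rect.mem_toSet.2 (by grind)) (by grind) (by grind) (by grind) (by grind) (by grind)
  grind

lemma exists_right_above (h : T.IsWall x c d) (hr : (T.R r).x1 = x) (hc : c ≤ (T.R r).y1)
    (hd : (T.R r).y2 < d) : ∃ q, (T.R q).x1 = x ∧ (T.R q).y1 = (T.R r).y2 := by
  have hry := (T.R r).hy
  obtain ⟨q, hq, hyq, -⟩ := h.exists_right_Ico ⟨hc.trans hry.le, hd⟩
  refine ⟨q, hq, hyq.1.eq_of_not_lt fun hlt => ?_⟩
  obtain rfl : r = q := T.eq_of_x1_eq_x1 (hr.trans hq.symm) (hry.trans hyq.2) hlt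
  exact hyq.2.false

lemma exists_left_above (h : T.IsWall x c d) (hl : (T.R l).x2 = x) (hc : c ≤ (T.R l).y1)
    (hd : (T.R l).y2 < d) : ∃ a, (T.R a).x2 = x ∧ (T.R a).y1 = (T.R l).y2 :=
  let ⟨a, ha, hla⟩ := h.reflect.exists_right_above (congrArg Neg.neg hl) hc hd
  ⟨a, neg_inj.1 ha, hla⟩

lemma exists_left_below (h : T.IsWall x c d) (hl : (T.R l).x2 = x) (hc : c < (T.R l).y1)
    (hd : (T.R l).y1 < d) :
    ∃ p, (T.R p).x2 = x ∧ (T.R p).y2 = (T.R l).y1 := by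
  have hly := (T.R l).hy
  obtain ⟨p, hp, hyp, -⟩ := h.exists_left_Ioc ⟨hc, hd.le⟩
  refine ⟨p, hp, (hyp.2.eq_of_not_lt fun hlt => ?_).symm⟩
  obtain rfl : p = l := T.eq_of_x2_eq_x2 (hp.trans hl.symm) (hyp.1.trans hly) hlt
  exact hyp.1.false

/-- The rectangles of the stagger are those around the end of `r` on the wall. -/
lemma exists_isStagger_of_lt (h : T.IsWall x c d) (hgen : Generic T) (hl : (T.R l).x2 = x)
    (hlc : (T.R l).y1 = c) (hr : (T.R r).x1 = x) (hrc : (T.R r).y1 = c)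
    (hlr : (T.R l).y2 < (T.R r).y2) (hrd : (T.R r).y2 < d) : ∃ p q, T.IsStagger p q := by
  have hry := (T.R r).hy
  obtain ⟨q, hq, hqr⟩ := h.exists_right_above hr hrc.ge hrd
  obtain ⟨a, ha, hya, hac, -⟩ := h.exists_left_Ico (y := (T.R r).y2) ⟨by linarith, hrd⟩
  have hca : c < (T.R a).y1 := hac.lt_of_ne fun hca => by
    obtain rfl : l = a := T.eq_of_x2_eq_x2 (hl.trans ha.symm)
      (by linarith [(T.R a).hy]) (by linarith [(T.R l).hy])
    exact hya.2.not_gt hlr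
  have har : (T.R a).y1 < (T.R r).y2 := hya.1.lt_of_ne
    (hqr ▸ h.y1_ne_y1 hgen ha hq hca (hya.1.trans_lt hrd))
  obtain ⟨p, hp, hpa⟩ := h.exists_left_below ha hca (har.trans hrd)
  have hpx := (T.R p).hx
  have hpy := (T.R p).hy
  have hax := (T.R a).hx
  have hrx := (T.R r).hx
  have hqx := (T.R q).hx
  have hqy := (T.R q).hy
  simp only [IsStagger, belowAdj_iff_leftAdj_swap, leftAdj_iff, Rect.swap]
  exact ⟨p, q, a, r, by grind⟩

lemma exists_isStagger (h : T.IsWall x c d) (hgen : Generic T)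
    (hside : ∀ i, ¬(T.R i).IsSide (vseg x c d)) :
    (∃ p q, T.IsStagger p q) ∨ ∃ p q, T.reflect.IsStagger p q := by
  simp only [Rect.isSide_vseg_iff h.lt] at hside
  obtain ⟨l, hl, hyl, hlc, hld⟩ := h.exists_left_Ico (left_mem_Ico.2 h.lt)
  obtain ⟨r, hr, hyr, hrc, hrd⟩ := h.exists_right_Ico (left_mem_Ico.2 h.lt)
  replace hlc : (T.R l).y1 = c := hyl.1.antisymm hlc
  replace hrc : (T.R r).y1 = c := hyr.1.antisymm hrc
  replace hld : (T.R l).y2 < d := hld.lt_of_ne fun e => hside l ⟨.inr hl, hlc, e⟩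
  replace hrd : (T.R r).y2 < d := hrd.lt_of_ne fun e => hside r ⟨.inl hr, hrc, e⟩
  rcases lt_trichotomy (T.R l).y2 (T.R r).y2 with hlt | heq | hlt
  · exact .inl (h.exists_isStagger_of_lt hgen hl hlc hr hrc hlt hrd)
  · obtain ⟨a, ha, hal⟩ := h.exists_left_above hl hlc.ge hld
    obtain ⟨q, hq, hqr⟩ := h.exists_right_above hr hrc.ge hrd
    exact absurd (hal.trans (heq.trans hqr.symm))
      (h.y1_ne_y1 hgen ha hq (hal ▸ hyl.2) (hal ▸ hld))
  · exact .inr (h.reflect.exists_isStagger_of_lt hgen.reflect (congrArg Neg.neg hr) hrc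
      (congrArg Neg.neg hl) hlc hlt hld)

end IsWall

namespace IsStagger

lemma of_weakEquiv {T' : Tiling I} (h : T.IsStagger p q) (hT : WeakEquiv T T') :
    T'.IsStagger p q :=
  let ⟨a, e, hpa, heq, hpe, hae, haq⟩ := h
  ⟨a, e, (hT.2.1 p a).1 hpa, (hT.2.1 e q).1 heq, (hT.1 p e).1 hpe, (hT.1 a e).1 hae,
    (hT.1 a q).1 haq⟩

lemma le (h : T.IsStagger p q) : (T.R p).x2 ≤ (T.R q).x1 ∧ (T.R p).y2 ≤ (T.R q).y1 := by
  obtain ⟨a, e, hpa, heq, hpe, hae, haq⟩ := h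
  rw [leftAdj_iff] at hpe hae haq
  exact ⟨(hpe.1.trans (hae.1.symm.trans haq.1)).le, hpa.1.trans_le (hae.2.1.le.trans heq.1.le)⟩

lemma four_le_area (h : T.IsStagger p q) (hp : (T.R p).area = 1) (hq : (T.R q).area = 1) :
    4 ≤ T.F.area := by
  simp only [Rect.area] at hp hq ⊢
  set a := (T.R p).x2 - (T.R p).x1
  set b := (T.R p).y2 - (T.R p).y1
  set a' := (T.R q).x2 - (T.R q).x1
  set b' := (T.R q).y2 - (T.R q).y1
  have ha : 0 < a := sub_pos.2 (T.R p).hx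
  have hb : 0 < b := sub_pos.2 (T.R p).hy
  have ha' : 0 < a' := sub_pos.2 (T.R q).hx
  have hb' : 0 < b' := sub_pos.2 (T.R q).hy
  have hmixed : 2 ≤ a * b' + a' * b := by
    have hprod : (a * b') * (a' * b) = 1 := by
      rw [mul_mul_mul_comm, mul_comm b' b, ← mul_mul_mul_comm, hp, hq, one_mul]
    nlinarith [sq_nonneg (a * b' - a' * b), mul_pos ha hb', mul_pos ha' hb]
  calc (4 : ℝ) ≤ a * b + a' * b' + (a * b' + a' * b) := by linarith
    _ = (a + a') * (b + b') := by ring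
    _ ≤ (T.F.x2 - T.F.x1) * (T.F.y2 - T.F.y1) := by
      gcongr
      · linarith [T.F.hx]
      · linarith [T.F_x1_le p, h.le.1, T.le_F_x2 q]
      · linarith [T.F_y1_le p, h.le.2, T.le_F_y2 q]

end IsStagger

lemma F_area_le_sum_area (T : Tiling I) : T.F.area ≤ ∑ i, (T.R i).area := by
  have hpos (A : Rect) : 0 ≤ A.area := mul_nonneg (sub_nonneg.2 A.hx.le) (sub_nonneg.2 A.hy.le)
  have hvol (A : Rect) : MeasureTheory.volume A.toSet = ENNReal.ofReal A.area := by
    rw [Rect.toSet, MeasureTheory.Measure.volume_eq_prod, MeasureTheory.Measure.prod_prod,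
      Real.volume_Icc, Real.volume_Icc, Rect.area, ENNReal.ofReal_mul (sub_nonneg.2 A.hx.le)]
  have hsub := MeasureTheory.measure_iUnion_fintype_le MeasureTheory.volume
    fun i => (T.R i).toSet
  simp only [T.union, hvol] at hsub
  rwa [← ENNReal.ofReal_sum_of_nonneg fun i _ => hpos _,
    ENNReal.ofReal_le_ofReal_iff (Finset.sum_nonneg fun i _ => hpos _)] at hsub

/-- Prescribing area `1` for `p` and `q` and total area at most `1` for the other rectangles makes
the bounding rectangle too small. -/
lemma IsStagger.not_areaUniversal (h : T.IsStagger p q) : ¬AreaUniversal T := by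
  classical
  intro huniv
  have hcard : (0 : ℝ) < Fintype.card I := Nat.cast_pos.2 (Fintype.card_pos_iff.2 ⟨p⟩)
  have hinv := inv_pos.2 hcard
  set w : I → ℝ := fun i => if i = p ∨ i = q then 1 else (Fintype.card I : ℝ)⁻¹
  obtain ⟨T', hT', harea⟩ := huniv w fun i => by grind
  have hfour : 4 ≤ T'.F.area := (h.of_weakEquiv hT').four_le_area
    ((harea p).trans (if_pos (.inl rfl))) ((harea q).trans (if_pos (.inr rfl)))
  have hthree : T'.F.area ≤ 3 :=
    calc T'.F.area ≤ ∑ i, (T'.R i).area := T'.F_area_le_sum_area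
      _ = ∑ i, w i := Finset.sum_congr rfl fun i _ => harea i
      _ ≤ ∑ i, ((if i = p then 1 else 0) + (if i = q then 1 else 0) +
          (Fintype.card I : ℝ)⁻¹) := Finset.sum_le_sum fun i _ => by grind
      _ = 3 := by
        rw [Finset.sum_add_distrib, Finset.sum_add_distrib, Fintype.sum_ite_eq',
          Fintype.sum_ite_eq', Finset.sum_const, Finset.card_univ, nsmul_eq_mul,
          mul_inv_cancel₀ hcard.ne']
        norm_num
  linarith

end Tiling

lemma AreaUniversal.exists_isSide_vseg {T : Tiling I} {x c d : ℝ} (h : AreaUniversal T)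
    (hgen : Generic T) (hcd : c < d) (hS : IsMaxInternalSeg T (vseg x c d)) :
    ∃ i, (T.R i).IsSide (vseg x c d) := by
  by_contra! hside
  rcases (Tiling.isWall_of_isMaxInternalSeg hcd hS).exists_isStagger hgen hside with
    ⟨p, q, hpq⟩ | ⟨p, q, hpq⟩
  · exact hpq.not_areaUniversal h
  · exact hpq.not_areaUniversal h.reflect

lemma AreaUniversal.oneSided {T : Tiling I} (h : AreaUniversal T) (hgen : Generic T) :
    OneSided T := by
  intro S hS
  rcases id hS.1 with ⟨x, c, d, hcd, rfl, -⟩ | ⟨a, b, y, hab, rfl, -⟩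
  · exact h.exists_isSide_vseg hgen hcd hS
  · have hS' := hS.swap
    rw [preimage_swap_hseg] at hS'
    obtain ⟨i, hi⟩ := h.swap.exists_isSide_vseg hgen.swap hab hS'
    exact ⟨i, preimage_swap_vseg y a b ▸ hi.swap⟩

/-- A generic rectangular tiling is area-universal if and only if every
maximal internal line segment of the tiling is a side of at least one of its rectangles. -/
theorem generic_areaUniversal_iff_every_maxSeg_is_side
    {I : Type*} [Fintype I] (T : Tiling I) (hgen : Generic T) :
    AreaUniversal T ↔
      ∀ S : Set (ℝ × ℝ), IsMaxInternalSeg T S → ∃ i : I, (T.R i).IsSide S := by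
  exact ⟨fun h => h.oneSided hgen, fun h => OneSided.areaUniversal h hgen⟩
end

section
/- Let R_1, …, R_n be a side-attachment sequence of axis-parallel rectangles and let 2 ≤ j ≤ n. Then the intersection R_j ∩ U_{j-1} (where U_{j-1} = R_1 ∪ ⋯ ∪ R_{j-1}) is simultaneously equal to one of the four sides of the rectangle R_j and to one of the four sides of the rectangle U_{j-1}. -/
/-!
A rectangle is the closure of its interior, so `R_j`, whose interior avoids that of every earlier
rectangle, has interior disjoint from that of `U_{j-1}`. Two rectangles `A`, `B` with disjoint
interiors are separated by a vertical or a horizontal line; up to exchanging them and transposing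
the plane, `A` lies to the left of `B`. If `A ∪ B` is a rectangle `W`, then the vertical slices of
`W` through the left side of `A` and the right side of `B` meet only one of the two rectangles, so
both span the full height of `W`. The projection of `W` to the first axis is an interval, which
leaves no gap between `A` and `B`; they meet exactly in the common side.
-/

open Set

variable {I : Type*} [Fintype I]

section Prod

variable {α β : Type*} {s s' u : Set α} {t t' v : Set β}

lemma eq_of_prod_union_prod_eq_prod (h : s ×ˢ t ∪ s' ×ˢ t' = u ×ˢ v)
    (hs : (s \ s').Nonempty) (ht : t.Nonempty) : t = v := by
  obtain ⟨x, hxs, hxs'⟩ := hs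
  obtain ⟨y, hy⟩ := ht
  have hxu : x ∈ u := (h.subset (Or.inl (mk_mem_prod hxs hy))).1
  have slice := congrArg (Prod.mk x ⁻¹' ·) h
  simpa only [preimage_union, mk_preimage_prod_right hxs, mk_preimage_prod_right_eq_empty hxs',
    union_empty, mk_preimage_prod_right hxu] using slice

lemma eq_and_eq_and_union_eq_of_prod_union_prod_eq_prod (h : s ×ˢ t ∪ s' ×ˢ t' = u ×ˢ v)
    (hs : (s \ s').Nonempty) (hs' : (s' \ s).Nonempty) (ht : t.Nonempty) (ht' : t'.Nonempty) :
    t = v ∧ t' = v ∧ s ∪ s' = u := by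
  obtain rfl : t = v := eq_of_prod_union_prod_eq_prod h hs ht
  obtain rfl : t' = t :=
    eq_of_prod_union_prod_eq_prod ((union_comm _ _).trans h) hs' ht'
  exact ⟨rfl, rfl, (prod_eq_iff_eq ht).1 (union_prod.trans h)⟩

end Prod

lemma eq_of_ordConnected_Icc_union_Icc {α : Type*} [LinearOrder α] [DenselyOrdered α]
    {a b c d : α} (hab : a ≤ b) (hbc : b ≤ c) (hcd : c ≤ d)
    (h : (Icc a b ∪ Icc c d).OrdConnected) : b = c := by
  by_contra hne
  obtain ⟨m, hbm, hmc⟩ := exists_between (hbc.lt_of_ne hne)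
  rcases h.out (Or.inl (right_mem_Icc.2 hab)) (Or.inr (left_mem_Icc.2 hcd)) ⟨hbm.le, hmc.le⟩ with
    hm | hm
  · exact hbm.not_ge hm.2
  · exact hmc.not_ge hm.1

namespace Rect

variable {A B W : Rect}

lemma interior_toSet (A : Rect) : interior A.toSet = Ioo A.x1 A.x2 ×ˢ Ioo A.y1 A.y2 := by
  rw [toSet, interior_prod_eq, interior_Icc, interior_Icc]

lemma closure_interior_toSet (A : Rect) : closure (interior A.toSet) = A.toSet := by
  rw [interior_toSet, closure_prod_eq, closure_Ioo A.hx.ne, closure_Ioo A.hy.ne, toSet]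

lemma disjoint_toSet_of_disjoint_interior {s : Set (ℝ × ℝ)} (hs : IsOpen s)
    (h : Disjoint s (interior A.toSet)) : Disjoint s A.toSet :=
  A.closure_interior_toSet ▸ h.closure_right hs

lemma disjoint_interior_iff : Disjoint (interior A.toSet) (interior B.toSet) ↔
    (A.x2 ≤ B.x1 ∨ B.x2 ≤ A.x1) ∨ (A.y2 ≤ B.y1 ∨ B.y2 ≤ A.y1) := by
  rw [disjoint_comm]
  simp only [interior_toSet, disjoint_prod, Ioo_disjoint_Ioo, min_le_iff, le_max_iff,
    A.hx.not_ge, B.hx.not_ge, A.hy.not_ge, B.hy.not_ge, false_or, or_false]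

/-- The reflection of a rectangle in the diagonal, which exchanges the two axes and so reduces
statements about horizontal sides to statements about vertical ones. -/
def transpose (A : Rect) : Rect := ⟨A.y1, A.y2, A.x1, A.x2, A.hy, A.hx⟩

lemma toSet_transpose (A : Rect) : A.transpose.toSet = Prod.swap ⁻¹' A.toSet :=
  (preimage_swap_prod _ _).symm

lemma isSide_transpose_iff {S : Set (ℝ × ℝ)} :
    A.transpose.IsSide (Prod.swap ⁻¹' S) ↔ A.IsSide S := by
  have swap_inj := preimage_injective.2 (Prod.swap_surjective (α := ℝ) (β := ℝ))
  have eq_vseg_iff (x c d : ℝ) : Prod.swap ⁻¹' S = vseg x c d ↔ S = hseg c d x := by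
    rw [← swap_inj.eq_iff (a := S), hseg, preimage_swap_prod, vseg]
  have eq_hseg_iff (a b y : ℝ) : Prod.swap ⁻¹' S = hseg a b y ↔ S = vseg y a b := by
    rw [← swap_inj.eq_iff (a := S), vseg, preimage_swap_prod, hseg]
  simp only [IsSide, transpose, eq_vseg_iff, eq_hseg_iff]
  tauto

lemma abut_of_union_eq_of_x2_le_x1 (hAB : A.x2 ≤ B.x1) (h : A.toSet ∪ B.toSet = W.toSet) :
    A.x2 = B.x1 ∧ A.y1 = B.y1 ∧ A.y2 = B.y2 := by
  have left_mem_diff : A.x1 ∈ Icc A.x1 A.x2 \ Icc B.x1 B.x2 :=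
    ⟨left_mem_Icc.2 A.hx.le, fun hx => (A.hx.trans_le hAB).not_ge hx.1⟩
  have right_mem_diff : B.x2 ∈ Icc B.x1 B.x2 \ Icc A.x1 A.x2 :=
    ⟨right_mem_Icc.2 B.hx.le, fun hx => (hAB.trans_lt B.hx).not_ge hx.2⟩
  obtain ⟨hA, hB, hx⟩ := eq_and_eq_and_union_eq_of_prod_union_prod_eq_prod h
    ⟨_, left_mem_diff⟩ ⟨_, right_mem_diff⟩ (nonempty_Icc.2 A.hy.le) (nonempty_Icc.2 B.hy.le)
  have hy : A.y1 = B.y1 ∧ A.y2 = B.y2 := (Icc_eq_Icc_iff A.hy.le).1 (hA.trans hB.symm)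
  exact ⟨eq_of_ordConnected_Icc_union_Icc A.hx.le hAB B.hx.le (hx ▸ ordConnected_Icc), hy⟩

lemma inter_eq_vseg_of_abut (hx : A.x2 = B.x1) (hy₁ : A.y1 = B.y1) (hy₂ : A.y2 = B.y2) :
    A.toSet ∩ B.toSet = vseg A.x2 A.y1 A.y2 := by
  rw [toSet, toSet, prod_inter_prod, ← hx, ← hy₁, ← hy₂, inter_self,
    Icc_inter_Icc_eq_singleton A.hx.le (hx ▸ B.hx.le), vseg]

lemma isSide_inter_of_union_eq_of_x2_le_x1 (hAB : A.x2 ≤ B.x1)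
    (h : A.toSet ∪ B.toSet = W.toSet) :
    A.IsSide (A.toSet ∩ B.toSet) ∧ B.IsSide (A.toSet ∩ B.toSet) := by
  obtain ⟨hx, hy₁, hy₂⟩ := abut_of_union_eq_of_x2_le_x1 hAB h
  have hside := inter_eq_vseg_of_abut hx hy₁ hy₂
  exact ⟨.inr (.inl hside), .inl (by rw [hside, hx, hy₁, hy₂])⟩

lemma isSide_inter_of_union_eq_of_x_separated (hAB : A.x2 ≤ B.x1 ∨ B.x2 ≤ A.x1)
    (h : A.toSet ∪ B.toSet = W.toSet) :
    A.IsSide (A.toSet ∩ B.toSet) ∧ B.IsSide (A.toSet ∩ B.toSet) := by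
  rcases hAB with hAB | hBA
  · exact isSide_inter_of_union_eq_of_x2_le_x1 hAB h
  · rw [inter_comm]
    exact (isSide_inter_of_union_eq_of_x2_le_x1 hBA ((union_comm _ _).trans h)).symm

lemma isSide_inter_of_union_eq (hdisj : Disjoint (interior A.toSet) (interior B.toSet))
    (h : A.toSet ∪ B.toSet = W.toSet) :
    A.IsSide (A.toSet ∩ B.toSet) ∧ B.IsSide (A.toSet ∩ B.toSet) := by
  rcases disjoint_interior_iff.1 hdisj with hx | hy
  · exact isSide_inter_of_union_eq_of_x_separated hx h
  · have htr : A.transpose.toSet ∪ B.transpose.toSet = W.transpose.toSet := by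
      simp only [toSet_transpose, ← preimage_union, h]
    simpa only [toSet_transpose, ← preimage_inter, isSide_transpose_iff] using
      isSide_inter_of_union_eq_of_x_separated (A := A.transpose) (B := B.transpose) hy htr

end Rect

theorem sideAttachSeq_inter_is_common_side_general
    {ι : Type*} [PartialOrder ι] (R : ι → Rect) (j : ι)
    (hdisj : ∀ i < j, Disjoint (interior (R j).toSet) (interior (R i).toSet))
    (U W : Rect) (hU : (⋃ i ∈ Iio j, (R i).toSet) = U.toSet)
    (hW : (⋃ i ∈ Iic j, (R i).toSet) = W.toSet) :
    (R j).IsSide ((R j).toSet ∩ U.toSet) ∧ U.IsSide ((R j).toSet ∩ U.toSet) := by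
  have hdisjU : Disjoint (interior (R j).toSet) U.toSet := by
    rw [← hU, disjoint_iUnion₂_right]
    exact fun i hi => Rect.disjoint_toSet_of_disjoint_interior isOpen_interior (hdisj i hi)
  have hunion : (R j).toSet ∪ U.toSet = W.toSet := by
    rw [← hU, ← hW, ← Iio_insert, biUnion_insert]
  exact Rect.isSide_inter_of_union_eq (hdisjU.mono_right interior_subset) hunion

/-- In a side-attachment sequence, for `2 ≤ j` (here `1 ≤ (j : ℕ)` in
0-based indexing), the intersection `R_j ∩ U_{j-1}` is simultaneously a side of the
rectangle `R_j` and a side of the rectangle `U_{j-1} = R_1 ∪ ⋯ ∪ R_{j-1}`. -/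
theorem sideAttachSeq_inter_is_common_side
    {n : ℕ} (R : Fin n → Rect) (h : SideAttachSeq R) (j : Fin n) (hj : 1 ≤ (j : ℕ))
    (U : Rect) (hU : (⋃ i ∈ Set.Iio j, (R i).toSet) = U.toSet) :
    (R j).IsSide ((R j).toSet ∩ U.toSet) ∧ U.IsSide ((R j).toSet ∩ U.toSet) := by
  obtain ⟨W, hW⟩ := h.2 j
  exact sideAttachSeq_inter_is_common_side_general R j
    (fun _ hij => disjoint_iff_inter_eq_empty.2 (h.1 hij.ne')) U W hU hW
end

section
/- Let R_1, …, R_n be a side-attachment sequence of axis-parallel rectangles and let 2 ≤ j < k ≤ n. Set s_j = R_j ∩ U_{j-1} and s_k = R_k ∩ U_{k-1}, where U_m = R_1 ∪ ⋯ ∪ R_m. If s_j and s_k are both vertical segments, then they lie on distinct vertical lines (their x-coordinates differ); if s_j and s_k are both horizontal segments, then they lie on distinct horizontal lines (their y-coordinates differ). In particular, the internal line segment created at a later insertion step never extends, by collinear continuation, a segment created at an earlier step. -/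
/-!
If two nondegenerate intervals meet in a single point `x`, they abut at `x`: it is the right end of
one and the left end of the other. Hence `x` is interior to every interval containing both of them,
but to neither of the two. Now project to the first coordinate. If the attachment segment `s_j` is
vertical at abscissa `x`, the projections of `R_j` and `U_{j-1}` meet only in `x`; since for `j < k`
both rectangles lie in `U_{k-1}`, the point `x` is interior to the projection of `U_{k-1}`. If `s_k`
is vertical, its abscissa is an endpoint of that same projection, so the two abscissae differ.
Horizontal segments are treated in the same way by projecting to the second coordinate.
-/

open Set

variable {I : Type*} [Fintype I]

section Interval

variable {α : Type*} [LinearOrder α] {a b a' b' p q x : α}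

lemma endpoints_of_Icc_inter_Icc_eq_singleton (hab : a < b) (hab' : a' < b')
    (h : Icc a b ∩ Icc a' b' = {x}) : (a = x ∧ b' = x) ∨ (b = x ∧ a' = x) := by
  rw [Icc_inter_Icc, Icc_eq_singleton_iff] at h
  obtain ⟨hmax, hmin⟩ := h
  rcases max_choice a a' with ha | ha <;> rcases min_choice b b' with hb | hb <;>
    rw [ha] at hmax <;> rw [hb] at hmin
  · exact absurd (hmax.trans hmin.symm) hab.ne
  · exact .inl ⟨hmax, hmin⟩
  · exact .inr ⟨hmin, hmax⟩
  · exact absurd (hmax.trans hmin.symm) hab'.ne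

lemma mem_Ioo_of_Icc_inter_Icc_eq_singleton (hab : a < b) (hab' : a' < b')
    (h : Icc a b ∩ Icc a' b' = {x}) (hsub : Icc a b ⊆ Icc p q) (hsub' : Icc a' b' ⊆ Icc p q) :
    x ∈ Ioo p q := by
  obtain ⟨hpa, hbq⟩ := (Icc_subset_Icc_iff hab.le).1 hsub
  obtain ⟨hpa', hbq'⟩ := (Icc_subset_Icc_iff hab'.le).1 hsub'
  rcases endpoints_of_Icc_inter_Icc_eq_singleton hab hab' h with ⟨rfl, rfl⟩ | ⟨rfl, rfl⟩
  · exact ⟨hpa'.trans_lt hab', hab.trans_le hbq⟩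
  · exact ⟨hpa.trans_lt hab, hab'.trans_le hbq'⟩

lemma notMem_Ioo_of_Icc_inter_Icc_eq_singleton (hab : a < b)
    (h : Icc a b ∩ Icc a' b' = {x}) : x ∉ Ioo a' b' := by
  intro hx
  rcases endpoints_of_Icc_inter_Icc_eq_singleton hab (hx.1.trans hx.2) h with ⟨-, hb'⟩ | ⟨-, ha'⟩
  · exact hx.2.ne' hb'
  · exact hx.1.ne ha'

end Interval

namespace Rect

variable {A B C : Rect} {a b c d x y : ℝ}

lemma toSet_nonempty (A : Rect) : A.toSet.Nonempty :=
  (nonempty_Icc.2 A.hx.le).prod (nonempty_Icc.2 A.hy.le)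

lemma toSet_subset_toSet_iff :
    A.toSet ⊆ B.toSet ↔ Icc A.x1 A.x2 ⊆ Icc B.x1 B.x2 ∧ Icc A.y1 A.y2 ⊆ Icc B.y1 B.y2 :=
  prod_subset_prod_iff' A.toSet_nonempty

lemma toSet_inter_toSet (A B : Rect) :
    A.toSet ∩ B.toSet =
      (Icc A.x1 A.x2 ∩ Icc B.x1 B.x2) ×ˢ (Icc A.y1 A.y2 ∩ Icc B.y1 B.y2) :=
  prod_inter_prod

lemma Icc_inter_Icc_of_inter_eq_vseg (hcd : c ≤ d) (h : A.toSet ∩ B.toSet = vseg x c d) :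
    Icc A.x1 A.x2 ∩ Icc B.x1 B.x2 = {x} := by
  have hne : (vseg x c d).Nonempty := (singleton_nonempty x).prod (nonempty_Icc.2 hcd)
  exact ((prod_eq_prod_iff_of_nonempty hne).1 (h.symm.trans (toSet_inter_toSet A B))).1.symm

lemma Icc_inter_Icc_of_inter_eq_hseg (hab : a ≤ b) (h : A.toSet ∩ B.toSet = hseg a b y) :
    Icc A.y1 A.y2 ∩ Icc B.y1 B.y2 = {y} := by
  have hne : (hseg a b y).Nonempty := (nonempty_Icc.2 hab).prod (singleton_nonempty y)
  exact ((prod_eq_prod_iff_of_nonempty hne).1 (h.symm.trans (toSet_inter_toSet A B))).2.symm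

lemma mem_Ioo_of_inter_eq_vseg (hcd : c ≤ d) (h : A.toSet ∩ B.toSet = vseg x c d)
    (hA : A.toSet ⊆ C.toSet) (hB : B.toSet ⊆ C.toSet) : x ∈ Ioo C.x1 C.x2 :=
  mem_Ioo_of_Icc_inter_Icc_eq_singleton A.hx B.hx (Icc_inter_Icc_of_inter_eq_vseg hcd h)
    (toSet_subset_toSet_iff.1 hA).1 (toSet_subset_toSet_iff.1 hB).1

lemma mem_Ioo_of_inter_eq_hseg (hab : a ≤ b) (h : A.toSet ∩ B.toSet = hseg a b y)
    (hA : A.toSet ⊆ C.toSet) (hB : B.toSet ⊆ C.toSet) : y ∈ Ioo C.y1 C.y2 :=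
  mem_Ioo_of_Icc_inter_Icc_eq_singleton A.hy B.hy (Icc_inter_Icc_of_inter_eq_hseg hab h)
    (toSet_subset_toSet_iff.1 hA).2 (toSet_subset_toSet_iff.1 hB).2

lemma notMem_Ioo_of_inter_eq_vseg (hcd : c ≤ d) (h : A.toSet ∩ B.toSet = vseg x c d) :
    x ∉ Ioo B.x1 B.x2 :=
  notMem_Ioo_of_Icc_inter_Icc_eq_singleton A.hx (Icc_inter_Icc_of_inter_eq_vseg hcd h)

lemma notMem_Ioo_of_inter_eq_hseg (hab : a ≤ b) (h : A.toSet ∩ B.toSet = hseg a b y) :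
    y ∉ Ioo B.y1 B.y2 :=
  notMem_Ioo_of_Icc_inter_Icc_eq_singleton A.hy (Icc_inter_Icc_of_inter_eq_hseg hab h)

end Rect

theorem sideAttachSeq_segments_not_collinear_general
    {ι : Type*} [Preorder ι] (R : ι → Rect) {j k : ι} (hjk : j < k) {Uj Uk : Rect}
    (hUj : (⋃ i ∈ Set.Iio j, (R i).toSet) = Uj.toSet)
    (hUk : (⋃ i ∈ Set.Iio k, (R i).toSet) = Uk.toSet) :
    (∀ x c d x' c' d' : ℝ, c ≤ d → c' ≤ d' →
        (R j).toSet ∩ Uj.toSet = vseg x c d →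
        (R k).toSet ∩ Uk.toSet = vseg x' c' d' → x ≠ x') ∧
    (∀ a b y a' b' y' : ℝ, a ≤ b → a' ≤ b' →
        (R j).toSet ∩ Uj.toSet = hseg a b y →
        (R k).toSet ∩ Uk.toSet = hseg a' b' y' → y ≠ y') := by
  have hRU : (R j).toSet ⊆ Uk.toSet :=
    hUk ▸ subset_biUnion_of_mem (u := fun i ↦ (R i).toSet) (mem_Iio.2 hjk)
  have hUU : Uj.toSet ⊆ Uk.toSet :=
    hUj ▸ hUk ▸ biUnion_subset_biUnion_left (Iio_subset_Iio hjk.le)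
  constructor
  · intro x c d x' c' d' hcd hcd' hsj hsk
    exact ne_of_mem_of_not_mem (Rect.mem_Ioo_of_inter_eq_vseg hcd hsj hRU hUU)
      (Rect.notMem_Ioo_of_inter_eq_vseg hcd' hsk)
  · intro a b y a' b' y' hab hab' hsj hsk
    exact ne_of_mem_of_not_mem (Rect.mem_Ioo_of_inter_eq_hseg hab hsj hRU hUU)
      (Rect.notMem_Ioo_of_inter_eq_hseg hab' hsk)

/-- In a side-attachment sequence, for `2 ≤ j < k` (0-based: `1 ≤ j < k`),
if the attachment segments `s_j = R_j ∩ U_{j-1}` and `s_k = R_k ∩ U_{k-1}` are both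
vertical then their x-coordinates differ, and if both horizontal then their
y-coordinates differ; so a later segment never collinearly extends an earlier one. -/
theorem sideAttachSeq_segments_not_collinear
    {n : ℕ} (R : Fin n → Rect) (h : SideAttachSeq R) (j k : Fin n)
    (hj : 1 ≤ (j : ℕ)) (hjk : j < k)
    (Uj Uk : Rect)
    (hUj : (⋃ i ∈ Set.Iio j, (R i).toSet) = Uj.toSet)
    (hUk : (⋃ i ∈ Set.Iio k, (R i).toSet) = Uk.toSet) :
    (∀ x c d x' c' d' : ℝ, c < d → c' < d' →
        (R j).toSet ∩ Uj.toSet = vseg x c d →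
        (R k).toSet ∩ Uk.toSet = vseg x' c' d' → x ≠ x') ∧
    (∀ a b y a' b' y' : ℝ, a < b → a' < b' →
        (R j).toSet ∩ Uj.toSet = hseg a b y →
        (R k).toSet ∩ Uk.toSet = hseg a' b' y' → y ≠ y') := by
  have := sideAttachSeq_segments_not_collinear_general R hjk hUj hUk
  exact ⟨fun _ _ _ _ _ _ hcd hcd' ↦ this.1 _ _ _ _ _ _ hcd.le hcd'.le,
    fun _ _ _ _ _ _ hab hab' ↦ this.2 _ _ _ _ _ _ hab.le hab'.le⟩
end
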